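/- arXiv:2307.16871 — 3 statements merged into one kernel-verified Lean document; each statement's English description precedes it below -/
import Mathlib

section
/- Let (Ξ, 𝒢, ℚ) be a complete probability space, (E, Δ) a complete metric space, T > 0, and X = (X_t)_{t∈[0,T]} a family of functions X_t: Ξ → E such that ω ↦ Δ(X_s(ω), X_t(ω)) is 𝒢-measurable for all s, t ∈ [0,T] and X is continuous in probability. Suppose there exist continuous, increasing functions δ: [0,T] → [0,∞) and θ: [0, T∨1] → [0,∞), with δ(0) = θ(0) = 0 and θ concave, such that for all 0 ≤ s ≤ t ≤ u ≤ T and all A ∈ 𝒢, E_ℚ[min(Δ(X_s, X_t), Δ(X_t, X_u)) · 1_A] ≤ δ(u−s) · θ(ℚ(A)), and such that ∫_0^T u^{−2} δ(u) θ(u) du < ∞. Then X has a càdlàg modification X′, i.e. a family X′ = (X′_t)_{t∈[0,T]} such that for every ω the path t ↦ X′_t(ω) is right-continuous with left limits on [0,T] and, for each t ∈ [0,T], the map ω ↦ Δ(X_t(ω), X′_t(ω)) is ℚ-a.s. equal to 0. -/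
open MeasureTheory Filter Set Topology
open scoped ENNReal Function

/-!
Chaining along dyadic grids moves a point of level `n + 1` to the closer of its two neighbours of
level `n`, at a cost of at most the largest gap `min (d x y) (d y z)` over consecutive triples
`x, y, z` of level `n + 1`. Hence, if these largest gaps are summable, the modulus `w''` of the path
along dyadic times vanishes with the mesh, and the path has one-sided limits along dyadic times. Its
right limits form a càdlàg path, which is a modification by continuity in probability.

To bound the expected largest gap over `N` triples of span `a`, split the probability space
according to which triple realizes the maximum. The hypothesis on each piece and Jensen's
inequality for `θ` give the bound `N δ(a) θ(1 / N)`. With `N = 2 T / a` and `a = T / 2 ^ n`, the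
integral condition makes these bounds summable in `n`.
-/

section TripleGap

variable {E : Type*} [PseudoEMetricSpace E]

/-- The quantity controlled by Bezandry–Fernique type criteria: it is small as soon as the middle
point is close to one of the two outer points, which still allows one jump. -/
noncomputable def tripleGap (a b c : E) : ℝ≥0∞ := min (edist a b) (edist b c)

theorem tripleGap_swap (a b c : E) : tripleGap a b c = tripleGap c b a := by
  rw [tripleGap, tripleGap, min_comm, edist_comm b c, edist_comm a b]

@[simp]
theorem tripleGap_self_left (a c : E) : tripleGap a a c = 0 := by simp [tripleGap]

@[simp]
theorem tripleGap_self_right (a b : E) : tripleGap a b b = 0 := by simp [tripleGap]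

theorem tripleGap_eq_ofReal {E : Type*} [PseudoMetricSpace E] (a b c : E) :
    tripleGap a b c = ENNReal.ofReal (min (dist a b) (dist b c)) := by
  rw [tripleGap, edist_dist, edist_dist, ENNReal.ofReal_min]

theorem tripleGap_le_add_of_edist_le {a b c a' b' c' : E} {r : ℝ≥0∞} (ha : edist a a' ≤ r)
    (hb : edist b b' ≤ r) (hc : edist c c' ≤ r) :
    tripleGap a b c ≤ tripleGap a' b' c' + 2 * r := by
  have edist_le_add {u v u' v' : E} (hu : edist u u' ≤ r) (hv : edist v v' ≤ r) :
      edist u v ≤ edist u' v' + 2 * r :=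
    calc edist u v ≤ edist u u' + edist u' v' + edist v' v := edist_triangle4 ..
      _ ≤ r + edist u' v' + r := by gcongr; rwa [edist_comm]
      _ = edist u' v' + 2 * r := by ring
  rw [tripleGap, tripleGap, min_add]
  exact min_le_min (edist_le_add ha hb) (edist_le_add hb hc)

/-- The largest gap over triples of consecutive terms, i.e. the discrete counterpart of the
modulus `w''` of Skorokhod and Billingsley. -/
noncomputable def consecutiveGap (z : ℕ → E) : ℝ≥0∞ := ⨆ k, tripleGap (z k) (z (k + 1)) (z (k + 2))

theorem tripleGap_le_consecutiveGap (z : ℕ → E) {i j k : ℕ} (hij : i ≤ j) (hjk : j ≤ k)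
    (hki : k ≤ i + 2) : tripleGap (z i) (z j) (z k) ≤ consecutiveGap z := by
  rcases hij.eq_or_lt with rfl | hij
  · simp
  rcases hjk.eq_or_lt with rfl | hjk
  · simp
  obtain rfl : j = i + 1 := by omega
  obtain rfl : k = i + 2 := by omega
  exact le_iSup (fun k => tripleGap (z k) (z (k + 1)) (z (k + 2))) i

theorem consecutiveGap_eq_iSup_fin {z : ℕ → E} {N : ℕ} (hz : ∀ k ≥ N, z k = z N) :
    consecutiveGap z = ⨆ k : Fin N, tripleGap (z k) (z (k + 1)) (z (k + 2)) := by
  refine le_antisymm (iSup_le fun k => ?_) (iSup_le fun k => le_iSup_of_le (k : ℕ) le_rfl)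
  rcases lt_or_ge k N with hk | hk
  · exact le_iSup (fun k : Fin N => tripleGap (z k) (z (k + 1)) (z (k + 2))) ⟨k, hk⟩
  · simp [hz k hk, hz (k + 1) (by omega)]

end TripleGap

section Chaining

variable {E : Type*} [PseudoEMetricSpace E]

/-- When `z` refines a sequence `z'` in the sense that `z (2 * j) = z' j`, this is the index `j`,
among those with `|2 * j - k| ≤ 1`, for which `z' j` is closest to `z k`. Both branches give `k / 2`
for even `k`, so the truncated `k - 1` does no harm at `k = 0`. -/
noncomputable def closestParent (z : ℕ → E) (k : ℕ) : ℕ :=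
  if edist (z (k - 1)) (z k) ≤ edist (z k) (z (k + 1)) then k / 2 else (k + 1) / 2

theorem monotone_closestParent (z : ℕ → E) : Monotone (closestParent z) := by
  refine monotone_nat_of_le_succ fun k => ?_
  unfold closestParent
  split_ifs <;> omega

theorem two_mul_closestParent_le (z : ℕ → E) (k : ℕ) : 2 * closestParent z k ≤ k + 1 := by
  unfold closestParent
  split_ifs <;> omega

theorem le_two_mul_closestParent (z : ℕ → E) (k : ℕ) : k ≤ 2 * closestParent z k + 1 := by
  unfold closestParent
  split_ifs <;> omega

theorem edist_closestParent_le (z : ℕ → E) (k : ℕ) :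
    edist (z k) (z (2 * closestParent z k)) ≤ consecutiveGap z := by
  obtain ⟨j, rfl | rfl⟩ := Nat.even_or_odd' k
  · have hparent : closestParent z (2 * j) = j := by
      unfold closestParent
      split_ifs <;> omega
    simp [hparent]
  · have hgap : tripleGap (z (2 * j)) (z (2 * j + 1)) (z (2 * j + 2)) ≤ consecutiveGap z :=
      tripleGap_le_consecutiveGap z (by omega) (by omega) le_rfl
    unfold closestParent
    split_ifs with hleft
    · rw [tripleGap, min_eq_left (by simpa using hleft), edist_comm] at hgap
      rwa [show 2 * ((2 * j + 1) / 2) = 2 * j by omega]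
    · rw [tripleGap, min_eq_right (by simpa using (not_le.1 hleft).le)] at hgap
      rwa [show 2 * ((2 * j + 1 + 1) / 2) = 2 * j + 2 by omega]

variable {y : ℕ → ℕ → E}

theorem exists_monotone_ancestor (hy : ∀ n k, y (n + 1) (2 * k) = y n k) (m g : ℕ) :
    ∃ q : ℕ → ℕ, Monotone q ∧ ∀ k, q k * 2 ^ g < k + 2 ^ g ∧ k < q k * 2 ^ g + 2 ^ g ∧
      edist (y (m + g) k) (y m (q k)) ≤ ∑ i ∈ Finset.range g, consecutiveGap (y (i + 1 + m)) := by
  induction g with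
  | zero => exact ⟨id, monotone_id, by simp⟩
  | succ g ih =>
    obtain ⟨q, hq, hqk⟩ := ih
    set p := closestParent (y (m + g + 1))
    refine ⟨q ∘ p, hq.comp (monotone_closestParent _), fun k => ?_⟩
    obtain ⟨hupper, hlower, hdist⟩ := hqk (p k)
    have hp_upper : 2 * p k ≤ k + 1 := two_mul_closestParent_le (y (m + g + 1)) k
    have hp_lower : k ≤ 2 * p k + 1 := le_two_mul_closestParent (y (m + g + 1)) k
    have hp_dist : edist (y (m + g + 1) k) (y (m + g) (p k)) ≤ consecutiveGap (y (m + g + 1)) := by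
      rw [← hy (m + g)]
      exact edist_closestParent_le _ k
    simp only [Function.comp_apply, pow_succ, ← mul_assoc]
    refine ⟨by omega, by omega, ?_⟩
    calc edist (y (m + g + 1) k) (y m (q (p k)))
        ≤ edist (y (m + g + 1) k) (y (m + g) (p k)) + edist (y (m + g) (p k)) (y m (q (p k))) :=
          edist_triangle ..
      _ ≤ consecutiveGap (y (m + g + 1)) +
          ∑ i ∈ Finset.range g, consecutiveGap (y (i + 1 + m)) := add_le_add hp_dist hdist
      _ = ∑ i ∈ Finset.range (g + 1), consecutiveGap (y (i + 1 + m)) := by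
          rw [Finset.sum_range_succ, add_comm, show m + g + 1 = g + 1 + m by ring]

theorem tripleGap_le_tsum_consecutiveGap (hy : ∀ n k, y (n + 1) (2 * k) = y n k) (m g : ℕ)
    {i j k : ℕ} (hij : i ≤ j) (hjk : j ≤ k) (hki : k ≤ i + 2 ^ g) :
    tripleGap (y (m + g) i) (y (m + g) j) (y (m + g) k) ≤
      2 * ∑' n, consecutiveGap (y (n + m)) := by
  obtain ⟨q, hq, hqk⟩ := exists_monotone_ancestor hy m g
  have hqki : q k ≤ q i + 2 := by
    have : q k * 2 ^ g < (q i + 3) * 2 ^ g := by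
      rw [add_mul]
      have := (hqk k).1
      have := (hqk i).2.1
      omega
    have := lt_of_mul_lt_mul_right this (Nat.zero_le _)
    omega
  set S := ∑ i ∈ Finset.range g, consecutiveGap (y (i + 1 + m))
  calc tripleGap (y (m + g) i) (y (m + g) j) (y (m + g) k)
      ≤ tripleGap (y m (q i)) (y m (q j)) (y m (q k)) + 2 * S :=
        tripleGap_le_add_of_edist_le (hqk i).2.2 (hqk j).2.2 (hqk k).2.2
    _ ≤ consecutiveGap (y m) + 2 * S := by
        gcongr
        exact tripleGap_le_consecutiveGap _ (hq hij) (hq hjk) hqki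
    _ ≤ 2 * (S + consecutiveGap (y m)) := by
        rw [mul_add, add_comm]
        gcongr
        exact le_mul_of_one_le_left' one_le_two
    _ = 2 * ∑ n ∈ Finset.range (g + 1), consecutiveGap (y (n + m)) := by
        rw [Finset.sum_range_succ', zero_add]
    _ ≤ 2 * ∑' n, consecutiveGap (y (n + m)) := by
        gcongr
        exact ENNReal.sum_le_tsum _

end Chaining

section DyadicGrid

/-- The nonnegative dyadic multiples of `h`. -/
def dyadicGrid (h : ℝ) : Set ℝ := {s | ∃ n k : ℕ, s = k * h / 2 ^ n}

/-- The values of `x` on the `n`-th level of `dyadicGrid h`. -/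
noncomputable def dyadicSample {E : Type*} (x : ℝ → E) (h : ℝ) (n k : ℕ) : E := x (k * h / 2 ^ n)

theorem dyadicSample_succ_two_mul {E : Type*} (x : ℝ → E) (h : ℝ) (n k : ℕ) :
    dyadicSample x h (n + 1) (2 * k) = dyadicSample x h n k := by
  unfold dyadicSample
  congr 1
  push_cast
  rw [pow_succ]
  field_simp

variable {h : ℝ}

theorem exists_forall_ge_eq_of_mem_dyadicGrid {s : ℝ} (hs : s ∈ dyadicGrid h) :
    ∃ n, ∀ m ≥ n, ∃ k : ℕ, s = k * h / 2 ^ m := by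
  obtain ⟨n, k, rfl⟩ := hs
  refine ⟨n, fun m hm => ⟨k * 2 ^ (m - n), ?_⟩⟩
  obtain ⟨g, rfl⟩ := Nat.exists_eq_add_of_le hm
  push_cast
  rw [Nat.add_sub_cancel_left, pow_add]
  field_simp

theorem exists_mem_dyadicGrid_between (hh : 0 < h) {a b : ℝ} (ha : 0 ≤ a) (hab : a < b) :
    ∃ s ∈ dyadicGrid h, a < s ∧ s < b := by
  obtain ⟨n, hn⟩ := pow_unbounded_of_one_lt (h / (b - a)) (one_lt_two (α := ℝ))
  have hmesh : h / 2 ^ n < b - a := by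
    rw [div_lt_iff₀ (by linarith)] at hn
    rwa [div_lt_iff₀' (by positivity)]
  have hmesh_pos : 0 < h / 2 ^ n := by positivity
  have hfloor_le := Nat.floor_le (a := a / (h / 2 ^ n)) (by positivity)
  have hlt_floor := Nat.lt_floor_add_one (a / (h / 2 ^ n))
  rw [le_div_iff₀ hmesh_pos] at hfloor_le
  rw [div_lt_iff₀ hmesh_pos] at hlt_floor
  refine ⟨_, ⟨n, ⌊a / (h / 2 ^ n)⌋₊ + 1, rfl⟩, ?_⟩
  rw [mul_div_assoc]
  push_cast
  constructor <;> linarith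

theorem neBot_nhdsWithin_dyadicGrid_inter_Ioi (hh : 0 < h) {t : ℝ} (ht : 0 ≤ t) :
    (𝓝[dyadicGrid h ∩ Ioi t] t).NeBot := by
  rw [← mem_closure_iff_nhdsWithin_neBot, Metric.mem_closure_iff]
  intro ε hε
  obtain ⟨s, hs, hts, hsε⟩ := exists_mem_dyadicGrid_between hh ht (lt_add_of_pos_right t hε)
  exact ⟨s, ⟨hs, hts⟩, by rw [dist_comm, Real.dist_eq, abs_lt]; constructor <;> linarith⟩

end DyadicGrid

section VanishingTripleGap

variable {E : Type*} [PseudoEMetricSpace E]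

/-- The modulus `w''` of Skorokhod and Billingsley of the restriction of `x` to `D` tends to `0`
with the mesh. -/
def VanishingTripleGap (x : ℝ → E) (D : Set ℝ) : Prop :=
  ∀ ε > 0, ∃ η > 0, ∀ s ∈ D, ∀ t ∈ D, ∀ u ∈ D, s ≤ t → t ≤ u → u ≤ s + η →
    tripleGap (x s) (x t) (x u) ≤ ε

theorem vanishingTripleGap_dyadicGrid {x : ℝ → E} {h : ℝ} (hh : 0 < h)
    (hsum : ∑' n, consecutiveGap (dyadicSample x h n) ≠ ∞) :
    VanishingTripleGap x (dyadicGrid h) := by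
  intro ε hε
  have htail : Tendsto (fun m => 2 * ∑' n, consecutiveGap (dyadicSample x h (n + m))) atTop
      (𝓝 0) := by
    simpa using ENNReal.Tendsto.const_mul (ENNReal.tendsto_sum_nat_add _ hsum)
      (Or.inr (ENNReal.ofNat_ne_top (n := 2)))
  obtain ⟨m, hm⟩ := (htail.eventually_lt_const hε).exists
  refine ⟨h / 2 ^ m, by positivity, fun s hs t ht u hu hst htu hus => ?_⟩
  obtain ⟨n₁, hs⟩ := exists_forall_ge_eq_of_mem_dyadicGrid hs
  obtain ⟨n₂, ht⟩ := exists_forall_ge_eq_of_mem_dyadicGrid ht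
  obtain ⟨n₃, hu⟩ := exists_forall_ge_eq_of_mem_dyadicGrid hu
  obtain ⟨g, hg⟩ : ∃ g, n₁ + n₂ + n₃ ≤ g := ⟨_, le_rfl⟩
  obtain ⟨i, rfl⟩ := hs (m + g) (by omega)
  obtain ⟨j, rfl⟩ := ht (m + g) (by omega)
  obtain ⟨k, rfl⟩ := hu (m + g) (by omega)
  have le_of_grid_le {a b : ℕ} (hab : (a : ℝ) * h / 2 ^ (m + g) ≤ b * h / 2 ^ (m + g)) :
      a ≤ b := by
    rw [div_le_div_iff_of_pos_right (by positivity)] at hab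
    exact_mod_cast le_of_mul_le_mul_right hab hh
  have hki : k ≤ i + 2 ^ g := by
    apply le_of_grid_le
    convert! hus using 1
    push_cast
    rw [pow_add]
    field_simp
  exact (tripleGap_le_tsum_consecutiveGap (dyadicSample_succ_two_mul x h) m g
    (le_of_grid_le hst) (le_of_grid_le htu) hki).trans hm.le

theorem VanishingTripleGap.comp_neg {x : ℝ → E} {D : Set ℝ} (hx : VanishingTripleGap x D) :
    VanishingTripleGap (fun s => x (-s)) (-D) := by
  intro ε hε
  obtain ⟨η, hη, hgap⟩ := hx ε hε
  refine ⟨η, hη, fun s hs t ht u hu hst htu hus => ?_⟩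
  rw [tripleGap_swap]
  exact hgap _ hu _ ht _ hs (neg_le_neg htu) (neg_le_neg hst) (by linarith)

-- If `x` moves by more than `ε` just before `t`, the gap bound leaves no room for another move.
theorem VanishingTripleGap.exists_lt_forall_edist_le {x : ℝ → E} {D : Set ℝ}
    (hx : VanishingTripleGap x D) (t : ℝ) {ε : ℝ≥0∞} (hε : 0 < ε) :
    ∃ a < t, ∀ s ∈ D ∩ Ioo a t, ∀ u ∈ D ∩ Ioo a t, edist (x s) (x u) ≤ 2 * ε := by
  obtain ⟨η, hη, hgap⟩ := hx ε hε
  by_cases hmove : ∃ s ∈ D ∩ Ioo (t - η) t, ∃ u ∈ D ∩ Ioo (t - η) t,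
      s ≤ u ∧ ε < edist (x s) (x u)
  · obtain ⟨s, hs, u, hu, hsu, hεsu⟩ := hmove
    have hafter (v : ℝ) (hv : v ∈ D ∩ Ioo u t) : edist (x u) (x v) ≤ ε := by
      have hsuv := hgap s hs.1 u hu.1 v hv.1 hsu hv.2.1.le (by linarith [hs.2.1, hv.2.2])
      exact (min_le_iff.1 hsuv).resolve_left hεsu.not_ge
    refine ⟨u, hu.2.2, fun v hv w hw => (edist_triangle_left _ _ (x u)).trans ?_⟩
    rw [two_mul]
    exact add_le_add (hafter v hv) (hafter w hw)
  · push Not at hmove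
    refine ⟨t - η, by linarith, fun s hs u hu => ?_⟩
    have hε2 : ε ≤ 2 * ε := le_mul_of_one_le_left' one_le_two
    rcases le_total s u with hsu | hus
    · exact (hmove s hs u hu hsu).trans hε2
    · exact edist_comm (x s) (x u) ▸ (hmove u hu s hs hus).trans hε2

variable [CompleteSpace E]

theorem VanishingTripleGap.exists_tendsto_left {x : ℝ → E} {D : Set ℝ}
    (hx : VanishingTripleGap x D) (t : ℝ) : ∃ L, Tendsto x (𝓝[D ∩ Iio t] t) (𝓝 L) := by
  rcases (𝓝[D ∩ Iio t] t).eq_or_neBot with hbot | hne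
  · exact ⟨x t, hbot ▸ tendsto_bot⟩
  refine cauchy_map_iff_exists_tendsto.1 (EMetric.cauchy_iff.2 ⟨(hne.map x).ne, fun ε hε => ?_⟩)
  obtain ⟨δ, hδ, hδε⟩ := exists_between (ENNReal.half_pos hε.ne')
  obtain ⟨a, hat, ha⟩ := hx.exists_lt_forall_edist_le t hδ
  have hmem : D ∩ Ioo a t ∈ 𝓝[D ∩ Iio t] t := by
    filter_upwards [self_mem_nhdsWithin, mem_nhdsWithin_of_mem_nhds (Ioi_mem_nhds hat)]
      with s hs has using ⟨hs.1, has, hs.2⟩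
  refine ⟨x '' (D ∩ Ioo a t), image_mem_map hmem, ?_⟩
  rintro _ ⟨s, hs, rfl⟩ _ ⟨u, hu, rfl⟩
  calc edist (x s) (x u) ≤ 2 * δ := ha s hs u hu
    _ < ε := by rwa [mul_comm, ← ENNReal.lt_div_iff_mul_lt (by simp) (by simp)]

theorem VanishingTripleGap.exists_tendsto_right {x : ℝ → E} {D : Set ℝ}
    (hx : VanishingTripleGap x D) (t : ℝ) : ∃ L, Tendsto x (𝓝[D ∩ Ioi t] t) (𝓝 L) := by
  obtain ⟨L, hL⟩ := hx.comp_neg.exists_tendsto_left (-t)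
  have hneg : Tendsto (fun s : ℝ => -s) (𝓝[D ∩ Ioi t] t) (𝓝[-D ∩ Iio (-t)] (-t)) :=
    continuous_neg.continuousWithinAt.tendsto_nhdsWithin fun s hs => by simpa using hs
  exact ⟨L, by simpa [Function.comp_def] using hL.comp hneg⟩

end VanishingTripleGap

section Cadlag

/-- `x` is càdlàg (right-continuous with left limits) as a function on `A`: values of `x` outside of
`A` play no role. -/
structure IsCadlagOn {E : Type*} [TopologicalSpace E] (x : ℝ → E) (A : Set ℝ) : Prop where
  tendsto_right : ∀ t ∈ A, Tendsto x (𝓝[A ∩ Ioi t] t) (𝓝 (x t))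
  exists_tendsto_left : ∀ t ∈ A, ∃ L, Tendsto x (𝓝[A ∩ Iio t] t) (𝓝 L)

theorem isCadlagOn_const {E : Type*} [TopologicalSpace E] (c : E) (A : Set ℝ) :
    IsCadlagOn (fun _ => c) A :=
  ⟨fun _ _ => tendsto_const_nhds, fun _ _ => ⟨c, tendsto_const_nhds⟩⟩

theorem tendsto_of_forall_mapClusterPt {S E : Type*} [TopologicalSpace S] [TopologicalSpace E]
    [RegularSpace E] {x z : S → E} {A D U : Set S} {t : S} {L : E} (hU : IsOpen U)
    (hz : ∀ s ∈ A, MapClusterPt (z s) (𝓝[D] s) x) (hx : Tendsto x (𝓝[D ∩ U] t) (𝓝 L)) :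
    Tendsto z (𝓝[A ∩ U] t) (𝓝 L) := by
  refine (closed_nhds_basis L).tendsto_right_iff.2 fun V ⟨hV, hVclosed⟩ => ?_
  obtain ⟨W, hW, htW, hWV⟩ := mem_nhdsWithin.1 (hx hV)
  filter_upwards [self_mem_nhdsWithin, mem_nhdsWithin_of_mem_nhds (hW.mem_nhds htW)]
    with s hs hsW
  refine hVclosed.mem_of_mapClusterPt (hz s hs.1) ?_
  filter_upwards [self_mem_nhdsWithin,
    mem_nhdsWithin_of_mem_nhds ((hW.inter hU).mem_nhds ⟨hsW, hs.2⟩)] with r hrD hrWU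
  exact hWV ⟨hrWU.1, hrD, hrWU.2⟩

theorem exists_isCadlagOn_of_tsum_consecutiveGap_ne_top {E : Type*} [PseudoEMetricSpace E]
    [CompleteSpace E] {x : ℝ → E} {h : ℝ} (hh : 0 < h)
    (hsum : ∑' n, consecutiveGap (dyadicSample x h n) ≠ ∞) :
    ∃ z : ℝ → E, IsCadlagOn z (Ici 0) ∧
      ∀ t, Tendsto x (𝓝[dyadicGrid h ∩ Ioi t] t) (𝓝 (z t)) := by
  have hgap := vanishingTripleGap_dyadicGrid hh hsum
  choose z hz using hgap.exists_tendsto_right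
  have hcluster (t : ℝ) (ht : t ∈ Ici 0) : MapClusterPt (z t) (𝓝[dyadicGrid h] t) x :=
    have := neBot_nhdsWithin_dyadicGrid_inter_Ioi hh ht
    (hz t).mapClusterPt.mono (nhdsWithin_mono _ inter_subset_left)
  refine ⟨z, ⟨fun t _ => tendsto_of_forall_mapClusterPt isOpen_Ioi hcluster (hz t), fun t _ => ?_⟩,
    hz⟩
  obtain ⟨L, hL⟩ := hgap.exists_tendsto_left t
  exact ⟨L, tendsto_of_forall_mapClusterPt isOpen_Iio hcluster hL⟩

end Cadlag

section MaximalInequality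

theorem sum_le_card_mul_of_concaveOn {ι : Type*} {S : Set ℝ} {φ : ℝ → ℝ} (hφ : ConcaveOn ℝ S φ)
    (t : Finset ι) {p : ι → ℝ} (hp : ∀ i ∈ t, p i ∈ S) :
    ∑ i ∈ t, φ (p i) ≤ t.card * φ ((∑ i ∈ t, p i) / t.card) := by
  rcases t.eq_empty_or_nonempty with rfl | ht
  · simp
  have hcard : (0 : ℝ) < t.card := by exact_mod_cast ht.card_pos
  have hJensen := hφ.le_map_sum (t := t) (w := fun _ => (t.card : ℝ)⁻¹) (fun _ _ => by positivity)
    (by simp [hcard.ne']) hp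
  simp only [smul_eq_mul, ← Finset.mul_sum] at hJensen
  rw [div_eq_inv_mul]
  rwa [inv_mul_le_iff₀ hcard] at hJensen

variable {Ξ ι : Type*} [MeasurableSpace Ξ]

theorem exists_measurable_partition_iSup_eq [Finite ι] [Nonempty ι] [LinearOrder ι]
    [LocallyFiniteOrderBot ι] {f : ι → Ξ → ℝ≥0∞} (hf : ∀ i, Measurable (f i)) :
    ∃ B : ι → Set Ξ, (∀ i, MeasurableSet (B i)) ∧ Pairwise (Disjoint on B) ∧ ⋃ i, B i = univ ∧
      ∀ i, ∀ ω ∈ B i, ⨆ j, f j ω = f i ω := by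
  set argmax : ι → Set Ξ := fun i => {ω | ⨆ j, f j ω ≤ f i ω}
  have hmeas (i : ι) : MeasurableSet (argmax i) := measurableSet_le (.iSup hf) (hf i)
  refine ⟨disjointed argmax, fun i => disjointedRec (fun _ _ h => h.diff (hmeas _)) (hmeas i),
    disjoint_disjointed _, ?_, fun i ω hω => ?_⟩
  · rw [iUnion_disjointed, eq_univ_iff_forall]
    intro ω
    obtain ⟨i, hi⟩ := exists_eq_ciSup_of_finite (f := fun j => f j ω)
    exact mem_iUnion.2 ⟨i, hi.ge⟩
  · exact le_antisymm (disjointed_subset argmax i hω) (le_iSup (fun j => f j ω) i)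

theorem lintegral_iSup_le_of_setLIntegral_le [Fintype ι] [Nonempty ι] [LinearOrder ι]
    [LocallyFiniteOrderBot ι] {Q : Measure Ξ} [IsFiniteMeasure Q] {f : ι → Ξ → ℝ≥0∞}
    (hf : ∀ i, Measurable (f i)) {φ : ℝ → ℝ} (hφ : ConcaveOn ℝ (Icc 0 (Q.real univ)) φ)
    (hφ_nonneg : ∀ p ∈ Icc 0 (Q.real univ), 0 ≤ φ p)
    (hfφ : ∀ i A, MeasurableSet A → ∫⁻ ω in A, f i ω ∂Q ≤ ENNReal.ofReal (φ (Q.real A))) :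
    ∫⁻ ω, ⨆ i, f i ω ∂Q ≤
      ENNReal.ofReal (Fintype.card ι * φ (Q.real univ / Fintype.card ι)) := by
  obtain ⟨B, hB, hB_disjoint, hB_univ, hB_iSup⟩ := exists_measurable_partition_iSup_eq hf
  have hB_mem (i : ι) : Q.real (B i) ∈ Icc 0 (Q.real univ) :=
    ⟨measureReal_nonneg, measureReal_mono (subset_univ _)⟩
  have hB_sum : ∑ i, Q.real (B i) = Q.real univ := by
    rw [← hB_univ, measureReal_iUnion_fintype hB_disjoint hB]
  calc ∫⁻ ω, ⨆ i, f i ω ∂Q = ∑ i, ∫⁻ ω in B i, f i ω ∂Q := by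
        rw [← setLIntegral_univ, ← hB_univ, lintegral_iUnion hB hB_disjoint, tsum_fintype]
        exact Finset.sum_congr rfl fun i _ => setLIntegral_congr_fun (hB i) (hB_iSup i)
    _ ≤ ∑ i, ENNReal.ofReal (φ (Q.real (B i))) := Finset.sum_le_sum fun i _ => hfφ i _ (hB i)
    _ = ENNReal.ofReal (∑ i, φ (Q.real (B i))) :=
        (ENNReal.ofReal_sum_of_nonneg fun i _ => hφ_nonneg _ (hB_mem i)).symm
    _ ≤ ENNReal.ofReal (Fintype.card ι * φ (Q.real univ / Fintype.card ι)) := by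
        rw [← hB_sum]
        exact ENNReal.ofReal_le_ofReal (sum_le_card_mul_of_concaveOn hφ _ fun i _ => hB_mem i)

theorem lintegral_consecutiveGap_le {E : Type*} [PseudoEMetricSpace E] {Q : Measure Ξ}
    [IsFiniteMeasure Q] {z : ℕ → Ξ → E} {N : ℕ} [NeZero N] (hz : ∀ k ≥ N, z k = z N)
    (hmeas : ∀ k, Measurable fun ω => tripleGap (z k ω) (z (k + 1) ω) (z (k + 2) ω))
    {φ : ℝ → ℝ} (hφ : ConcaveOn ℝ (Icc 0 (Q.real univ)) φ)
    (hφ_nonneg : ∀ p ∈ Icc 0 (Q.real univ), 0 ≤ φ p)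
    (hgap : ∀ k A, MeasurableSet A → ∫⁻ ω in A, tripleGap (z k ω) (z (k + 1) ω) (z (k + 2) ω) ∂Q ≤
      ENNReal.ofReal (φ (Q.real A))) :
    ∫⁻ ω, consecutiveGap (z · ω) ∂Q ≤ ENNReal.ofReal (N * φ (Q.real univ / N)) := by
  have hfin (ω : Ξ) : consecutiveGap (z · ω) =
      ⨆ k : Fin N, tripleGap (z k ω) (z (k + 1) ω) (z (k + 2) ω) :=
    consecutiveGap_eq_iSup_fin fun k hk => congrFun (hz k hk) ω
  simpa only [hfin, Fintype.card_fin] using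
    lintegral_iSup_le_of_setLIntegral_le (ι := Fin N) (fun k => hmeas k) hφ hφ_nonneg
      fun k => hgap k

end MaximalInequality

section DyadicSeries

theorem div_le_max_mul_div_of_concaveOn {θ : ℝ → ℝ} {R : ℝ} (hθ : ConcaveOn ℝ (Icc 0 R) θ)
    (hmono : MonotoneOn θ (Icc 0 R)) (hθ0 : 0 ≤ θ 0) {u v : ℝ} (hu : u ∈ Ioc 0 R)
    (hv : v ∈ Ioc 0 R) : θ v / v ≤ max (u / v) 1 * (θ u / u) := by
  have hu_mem := Ioc_subset_Icc_self hu
  have hv_mem := Ioc_subset_Icc_self hv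
  have hzero : (0 : ℝ) ∈ Icc 0 R := ⟨le_rfl, hu_mem.1.trans hu.2⟩
  have hθu : 0 ≤ θ u := hθ0.trans (hmono hzero hu_mem hu_mem.1)
  have hθuu : 0 ≤ θ u / u := div_nonneg hθu hu_mem.1
  rcases le_total v u with hvu | huv
  · calc θ v / v ≤ θ u / v := div_le_div_of_nonneg_right (hmono hv_mem hu_mem hvu) hv_mem.1
      _ = u / v * (θ u / u) := by field_simp [hu.1.ne']
      _ ≤ max (u / v) 1 * (θ u / u) := by gcongr; exact le_max_left _ _
  · have hle_one : u / v ≤ 1 := (div_le_one hv.1).2 huv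
    have hchord : u / v * θ v ≤ θ u := by
      have hconcave := hθ.2 hv_mem hzero (div_nonneg hu_mem.1 hv_mem.1) (sub_nonneg.2 hle_one)
        (add_sub_cancel _ _)
      simp only [smul_eq_mul, mul_zero, add_zero, div_mul_cancel₀ u hv.1.ne'] at hconcave
      exact (le_add_of_nonneg_right (mul_nonneg (sub_nonneg.2 hle_one) hθ0)).trans hconcave
    calc θ v / v = u / v * θ v / u := by field_simp [hu.1.ne']
      _ ≤ θ u / u := div_le_div_of_nonneg_right hchord hu_mem.1
      _ ≤ max (u / v) 1 * (θ u / u) := le_mul_of_one_le_left hθuu (le_max_right _ _)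

theorem ofReal_div_le_lintegral_Ioc_div_sq {g : ℝ → ℝ} {a : ℝ} (ha : 0 < a)
    (hg : ∀ u ∈ Ioc a (2 * a), g a ≤ g u) :
    ENNReal.ofReal (g a / a) ≤ 4 * ∫⁻ u in Ioc a (2 * a), ENNReal.ofReal (g u / u ^ 2) := by
  rcases lt_or_ge (g a) 0 with hneg | hnonneg
  · rw [ENNReal.ofReal_of_nonpos (div_nonpos_of_nonpos_of_nonneg hneg.le ha.le)]
    exact zero_le
  calc ENNReal.ofReal (g a / a)
      = 4 * (ENNReal.ofReal (g a / (2 * a) ^ 2) * volume (Ioc a (2 * a))) := by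
        rw [Real.volume_Ioc, ← ENNReal.ofReal_mul (by positivity),
          ← ENNReal.ofReal_ofNat 4, ← ENNReal.ofReal_mul (by norm_num)]
        congr 1
        field_simp
        ring
    _ = 4 * ∫⁻ _ in Ioc a (2 * a), ENNReal.ofReal (g a / (2 * a) ^ 2) := by
        rw [setLIntegral_const]
    _ ≤ 4 * ∫⁻ u in Ioc a (2 * a), ENNReal.ofReal (g u / u ^ 2) := by
        gcongr 4 * ?_
        refine setLIntegral_mono' measurableSet_Ioc fun u hu => ENNReal.ofReal_le_ofReal ?_
        have hu_pos : 0 < u := ha.trans hu.1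
        exact div_le_div₀ (hnonneg.trans (hg u hu)) (hg u hu) (by positivity)
          (pow_le_pow_left₀ hu_pos.le hu.2 2)

theorem tsum_ofReal_dyadic_div_le_lintegral_div_sq {g : ℝ → ℝ} {T : ℝ} (hT : 0 < T)
    (hg : MonotoneOn g (Ioc 0 T)) :
    ∑' n : ℕ, ENNReal.ofReal (g (T / 2 ^ (n + 1)) / (T / 2 ^ (n + 1))) ≤
      4 * ∫⁻ u in Ioc 0 T, ENNReal.ofReal (g u / u ^ 2) := by
  have hanti : Antitone fun n : ℕ => T / 2 ^ n := fun m n hmn =>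
    div_le_div_of_nonneg_left hT.le (by positivity) (pow_le_pow_right₀ one_le_two hmn)
  have hle (n : ℕ) : T / 2 ^ n ≤ T := by simpa using hanti n.zero_le
  have hdouble (n : ℕ) : 2 * (T / 2 ^ (n + 1)) = T / 2 ^ n := by
    rw [pow_succ]
    field_simp
  have hdisjoint : Pairwise (Disjoint on fun n : ℕ => Ioc (T / 2 ^ (n + 1)) (T / 2 ^ n)) :=
    hanti.pairwise_disjoint_on_Ioc_succ
  calc ∑' n : ℕ, ENNReal.ofReal (g (T / 2 ^ (n + 1)) / (T / 2 ^ (n + 1)))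
      ≤ ∑' n : ℕ, 4 * ∫⁻ u in Ioc (T / 2 ^ (n + 1)) (T / 2 ^ n),
          ENNReal.ofReal (g u / u ^ 2) := by
        refine ENNReal.tsum_le_tsum fun n => ?_
        have hpos : 0 < T / 2 ^ (n + 1) := by positivity
        rw [← hdouble n]
        refine ofReal_div_le_lintegral_Ioc_div_sq hpos fun u hu => ?_
        rw [hdouble n] at hu
        exact hg ⟨hpos, hle _⟩ ⟨hpos.trans hu.1, hu.2.trans (hle n)⟩ hu.1.le
    _ = 4 * ∫⁻ u in ⋃ n : ℕ, Ioc (T / 2 ^ (n + 1)) (T / 2 ^ n), ENNReal.ofReal (g u / u ^ 2) := by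
        rw [ENNReal.tsum_mul_left, lintegral_iUnion (fun _ => measurableSet_Ioc) hdisjoint]
    _ ≤ 4 * ∫⁻ u in Ioc 0 T, ENNReal.ofReal (g u / u ^ 2) := by
        gcongr
        exact iUnion_subset fun n => Ioc_subset_Ioc (by positivity) (hle n)

end DyadicSeries

section Modification

variable {Ξ E : Type*} [MeasurableSpace Ξ] {Q : Measure Ξ} [PseudoEMetricSpace E]

theorem ae_inseparable_of_tendstoInMeasure {ι : Type*} {l : Filter ι} [l.NeBot]
    [l.IsCountablyGenerated] {Y : ι → Ξ → E} {g g' : Ξ → E} (hg : TendstoInMeasure Q Y l g)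
    (hg' : ∀ᵐ ω ∂Q, Tendsto (Y · ω) l (𝓝 (g' ω))) : ∀ᵐ ω ∂Q, Inseparable (g ω) (g' ω) := by
  obtain ⟨s, hs, hsg⟩ := hg.exists_seq_tendsto_ae'
  filter_upwards [hsg, hg'] with ω hω hω'
  exact tendsto_nhds_unique_inseparable hω (hω'.comp hs)

theorem exists_isCadlagOn_ae_inseparable [CompleteSpace E] {Y : ℝ → Ξ → E} {h : ℝ} (hh : 0 < h)
    (hcont : ∀ t ≥ 0, TendstoInMeasure Q Y (𝓝[>] t) (Y t))
    (hsum : ∀ᵐ ω ∂Q, ∑' n, consecutiveGap (dyadicSample (Y · ω) h n) ≠ ∞) :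
    ∃ Z : ℝ → Ξ → E, (∀ ω, IsCadlagOn (Z · ω) (Ici 0)) ∧
      ∀ t ≥ 0, ∀ᵐ ω ∂Q, Inseparable (Y t ω) (Z t ω) := by
  have hpath (ω : Ξ) : ∃ z : ℝ → E, IsCadlagOn z (Ici 0) ∧
      (∑' n, consecutiveGap (dyadicSample (Y · ω) h n) ≠ ∞ →
        ∀ t, Tendsto (Y · ω) (𝓝[dyadicGrid h ∩ Ioi t] t) (𝓝 (z t))) := by
    by_cases hω : ∑' n, consecutiveGap (dyadicSample (Y · ω) h n) = ∞
    · exact ⟨fun _ => Y 0 ω, isCadlagOn_const _ _, absurd hω⟩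
    · obtain ⟨z, hz, hYz⟩ := exists_isCadlagOn_of_tsum_consecutiveGap_ne_top hh hω
      exact ⟨z, hz, fun _ => hYz⟩
  choose Z hZ hYZ using hpath
  refine ⟨fun t ω => Z ω t, hZ, fun t ht => ?_⟩
  have := neBot_nhdsWithin_dyadicGrid_inter_Ioi hh ht
  exact ae_inseparable_of_tendstoInMeasure
    (fun ε hε => (hcont t ht ε hε).mono_left (nhdsWithin_mono _ inter_subset_right))
    (hsum.mono fun ω hω => hYZ ω hω t)

theorem lintegral_consecutiveGap_dyadicSample_le [IsFiniteMeasure Q] {Y : ℝ → Ξ → E} {h : ℝ}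
    (hh : 0 ≤ h) {n N : ℕ} [NeZero N] (hY : ∀ t ≥ N * h / 2 ^ n, Y t = Y (N * h / 2 ^ n))
    (hmeas : ∀ s ≥ 0, ∀ t ≥ 0, Measurable fun ω => edist (Y s ω) (Y t ω))
    {φ : ℝ → ℝ} (hφ : ConcaveOn ℝ (Icc 0 (Q.real univ)) φ)
    (hφ_nonneg : ∀ p ∈ Icc 0 (Q.real univ), 0 ≤ φ p)
    (hgap : ∀ s t u, 0 ≤ s → s ≤ t → t ≤ u → u - s = 2 * h / 2 ^ n → ∀ A, MeasurableSet A →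
      ∫⁻ ω in A, tripleGap (Y s ω) (Y t ω) (Y u ω) ∂Q ≤ ENNReal.ofReal (φ (Q.real A))) :
    ∫⁻ ω, consecutiveGap (dyadicSample (Y · ω) h n) ∂Q ≤
      ENNReal.ofReal (N * φ (Q.real univ / N)) := by
  refine lintegral_consecutiveGap_le (z := fun k => Y (k * h / 2 ^ n))
    (fun k hk => hY _ (by gcongr)) (fun k => ?_) hφ hφ_nonneg
    fun k => hgap (k * h / 2 ^ n) ((k + 1 : ℕ) * h / 2 ^ n) ((k + 2 : ℕ) * h / 2 ^ n)
      (by positivity) (by gcongr; omega) (by gcongr; omega) (by push_cast; ring)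
  exact (hmeas _ (by positivity) _ (by positivity)).min (hmeas _ (by positivity) _ (by positivity))

-- There are `N = 2 ^ (n + 2)` triples, each of span `a = T / 2 ^ (n + 1)`, so that `N = 2 * T / a`:
-- this is where the weight `u⁻²` of the integral condition comes from.
theorem lintegral_consecutiveGap_dyadicSample_div_four_le [IsProbabilityMeasure Q]
    {Y : ℝ → Ξ → E} {T : ℝ} (hT : 0 < T) (hY : ∀ t ≥ T, Y t = Y T)
    (hmeas : ∀ s ≥ 0, ∀ t ≥ 0, Measurable fun ω => edist (Y s ω) (Y t ω)) {θ : ℝ → ℝ}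
    (hθ_mono : MonotoneOn θ (Icc 0 (max T 1))) (hθ_nonneg : ∀ u ∈ Icc 0 (max T 1), 0 ≤ θ u)
    (hθ : ConcaveOn ℝ (Icc 0 (max T 1)) θ) {c : ℝ} (hc : 0 ≤ c) {n : ℕ}
    (hgap : ∀ s t u, 0 ≤ s → s ≤ t → t ≤ u → u - s = T / 2 ^ (n + 1) → ∀ A, MeasurableSet A →
      ∫⁻ ω in A, tripleGap (Y s ω) (Y t ω) (Y u ω) ∂Q ≤ ENNReal.ofReal (c * θ (Q.real A))) :
    ∫⁻ ω, consecutiveGap (dyadicSample (Y · ω) (T / 4) n) ∂Q ≤ ENNReal.ofReal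
      (max (2 * T) 1 * (c * θ (T / 2 ^ (n + 1)) / (T / 2 ^ (n + 1)))) := by
  set N : ℕ := 2 ^ (n + 2) with hN
  set a := T / 2 ^ (n + 1) with ha
  have ha_mem : a ∈ Ioc 0 (max T 1) :=
    ⟨by positivity, le_max_of_le_left (div_le_self hT.le (one_le_pow₀ one_le_two))⟩
  have hN_mem : 1 / (N : ℝ) ∈ Ioc 0 (max T 1) :=
    ⟨by positivity, le_max_of_le_right (div_le_self zero_le_one (mod_cast Nat.one_le_two_pow))⟩
  have hunit : Icc 0 (Q.real univ) ⊆ Icc 0 (max T 1) := by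
    simpa using Icc_subset_Icc_right (le_max_right T 1)
  have hN_endpoint : N * (T / 4) / 2 ^ n = T := by
    rw [hN, pow_add]
    push_cast
    field_simp
  have hspan : 2 * (T / 4) / 2 ^ n = a := by
    rw [ha, pow_succ]
    field_simp
    norm_num
  have hNa : a / (1 / N) = 2 * T := by
    rw [ha, hN]
    push_cast
    field_simp
    ring
  refine (lintegral_consecutiveGap_dyadicSample_le (by positivity) (by rwa [hN_endpoint]) hmeas
    ((hθ.subset hunit (convex_Icc _ _)).smul hc)
    (fun p hp => mul_nonneg hc (hθ_nonneg p (hunit hp))) (by rwa [hspan])).trans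
    (ENNReal.ofReal_le_ofReal ?_)
  calc N * (c * θ (Q.real univ / N)) = c * (θ (1 / N) / (1 / N)) := by
        rw [probReal_univ]
        field_simp
    _ ≤ c * (max (2 * T) 1 * (θ a / a)) := by
        rw [← hNa]
        gcongr
        exact div_le_max_mul_div_of_concaveOn hθ hθ_mono
          (hθ_nonneg 0 ⟨le_rfl, ha_mem.1.le.trans ha_mem.2⟩) ha_mem hN_mem
    _ = max (2 * T) 1 * (c * θ a / a) := by ring

theorem ae_tsum_consecutiveGap_ne_top [IsProbabilityMeasure Q] {Y : ℝ → Ξ → E} {T : ℝ}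
    (hT : 0 < T) (hY : ∀ t ≥ T, Y t = Y T)
    (hmeas : ∀ s ≥ 0, ∀ t ≥ 0, Measurable fun ω => edist (Y s ω) (Y t ω)) {δ θ : ℝ → ℝ}
    (hδ_mono : MonotoneOn δ (Icc 0 T)) (hδ_nonneg : ∀ u ∈ Icc 0 T, 0 ≤ δ u)
    (hθ_mono : MonotoneOn θ (Icc 0 (max T 1))) (hθ_nonneg : ∀ u ∈ Icc 0 (max T 1), 0 ≤ θ u)
    (hθ : ConcaveOn ℝ (Icc 0 (max T 1)) θ)
    (hgap : ∀ s t u, 0 ≤ s → s ≤ t → t ≤ u → u - s ≤ T → ∀ A, MeasurableSet A →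
      ∫⁻ ω in A, tripleGap (Y s ω) (Y t ω) (Y u ω) ∂Q ≤
        ENNReal.ofReal (δ (u - s) * θ (Q.real A)))
    (hint : ∫⁻ u in Ioc 0 T, ENNReal.ofReal (δ u * θ u / u ^ 2) ≠ ∞) :
    ∀ᵐ ω ∂Q, ∑' n, consecutiveGap (dyadicSample (Y · ω) (T / 4) n) ≠ ∞ := by
  have hmeas_gap (n : ℕ) :
      Measurable fun ω => consecutiveGap (dyadicSample (Y · ω) (T / 4) n) :=
    .iSup fun k => (hmeas _ (by positivity) _ (by positivity)).min
      (hmeas _ (by positivity) _ (by positivity))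
  have hsubset : Ioc 0 T ⊆ Icc 0 (max T 1) := fun u hu => ⟨hu.1.le, le_max_of_le_left hu.2⟩
  have hδθ_mono : MonotoneOn (fun u => δ u * θ u) (Ioc 0 T) :=
    (hδ_mono.mono Ioc_subset_Icc_self).mul (hθ_mono.mono hsubset)
      (fun u hu => hδ_nonneg u (Ioc_subset_Icc_self hu)) fun u hu => hθ_nonneg u (hsubset hu)
  have hlevel (n : ℕ) : ∫⁻ ω, consecutiveGap (dyadicSample (Y · ω) (T / 4) n) ∂Q ≤
      ENNReal.ofReal (max (2 * T) 1) * ENNReal.ofReal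
        (δ (T / 2 ^ (n + 1)) * θ (T / 2 ^ (n + 1)) / (T / 2 ^ (n + 1))) := by
    have ha_mem : T / 2 ^ (n + 1) ∈ Icc 0 T :=
      ⟨by positivity, div_le_self hT.le (one_le_pow₀ one_le_two)⟩
    rw [← ENNReal.ofReal_mul (by positivity)]
    refine lintegral_consecutiveGap_dyadicSample_div_four_le hT hY hmeas hθ_mono hθ_nonneg hθ
      (hδ_nonneg _ ha_mem) fun s t u hs hst htu hus => ?_
    rw [← hus]
    exact hgap s t u hs hst htu (hus ▸ ha_mem.2)
  refine (ae_lt_top' (Measurable.tsum hmeas_gap).aemeasurable ?_).mono fun _ => ne_of_lt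
  rw [lintegral_tsum fun n => (hmeas_gap n).aemeasurable]
  refine ne_top_of_le_ne_top ?_ (ENNReal.tsum_le_tsum hlevel)
  rw [ENNReal.tsum_mul_left]
  exact ENNReal.mul_ne_top ENNReal.ofReal_ne_top (ne_top_of_le_ne_top
    (ENNReal.mul_ne_top ENNReal.ofNat_ne_top hint)
    (tsum_ofReal_dyadic_div_le_lintegral_div_sq hT hδθ_mono))

theorem tendstoInMeasure_of_forall_tendsto_dist {E ι : Type*} [PseudoMetricSpace E] {l : Filter ι}
    {Y : ι → Ξ → E} {g : Ξ → E}
    (hY : ∀ ε > 0, Tendsto (fun i => Q {ω | ε < dist (Y i ω) (g ω)}) l (𝓝 0)) :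
    TendstoInMeasure Q Y l g := by
  refine tendstoInMeasure_iff_dist.2 fun ε hε => tendsto_of_tendsto_of_tendsto_of_le_of_le
    tendsto_const_nhds (hY (ε / 2) (half_pos hε)) (fun _ => zero_le) fun i => measure_mono ?_
  exact fun ω hω => (half_lt_self hε).trans_le hω

theorem tendstoInMeasure_comp_min {X : ℝ → Ξ → E} {T t : ℝ}
    (hX : t < T → TendstoInMeasure Q X (𝓝[>] t) (X t)) :
    TendstoInMeasure Q (fun s => X (min s T)) (𝓝[>] t) (X (min t T)) := by
  rcases lt_or_ge t T with htT | hTt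
  · rw [min_eq_left htT.le]
    refine (hX htT).congr' ?_ .rfl
    filter_upwards [Ioo_mem_nhdsGT htT] with s hs
    rw [min_eq_left hs.2.le]
  · refine fun ε hε => tendsto_const_nhds.congr' ?_
    filter_upwards [self_mem_nhdsWithin] with s hs
    simp [min_eq_right hTt, min_eq_right (hTt.trans (le_of_lt hs)), hε.ne']

theorem setLIntegral_tripleGap_comp_min_le {X : ℝ → Ξ → E} {T : ℝ} (hT : 0 ≤ T) {A : Set Ξ}
    {δ : ℝ → ℝ} (hδ : MonotoneOn δ (Icc 0 T)) {c : ℝ} (hc : 0 ≤ c)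
    (hgap : ∀ s t u, 0 ≤ s → s ≤ t → t ≤ u → u ≤ T →
      ∫⁻ ω in A, tripleGap (X s ω) (X t ω) (X u ω) ∂Q ≤ ENNReal.ofReal (δ (u - s) * c))
    {s t u : ℝ} (hs : 0 ≤ s) (hst : s ≤ t) (htu : t ≤ u) (hus : u - s ≤ T) :
    ∫⁻ ω in A, tripleGap (X (min s T) ω) (X (min t T) ω) (X (min u T) ω) ∂Q ≤
      ENNReal.ofReal (δ (u - s) * c) := by
  have hmin_mono : min s T ≤ min u T := min_le_min_right T (hst.trans htu)
  have hshrink : min u T - min s T ≤ u - s := by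
    rcases min_cases s T with ⟨h, _⟩ | ⟨h, _⟩
    · linarith [min_le_left u T]
    · linarith [min_le_right u T, hst.trans htu]
  refine (hgap _ _ _ (le_min hs hT) (min_le_min_right T hst) (min_le_min_right T htu)
    (min_le_right u T)).trans (ENNReal.ofReal_le_ofReal ?_)
  gcongr
  exact hδ ⟨sub_nonneg.2 hmin_mono, hshrink.trans hus⟩ ⟨by linarith, hus⟩ hshrink

end Modification

theorem cadlag_modification_general {Ξ : Type*} [MeasurableSpace Ξ] (Q : Measure Ξ)
    [IsProbabilityMeasure Q] {E : Type*} [PseudoMetricSpace E] [CompleteSpace E]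
    {T : ℝ} (hT : 0 < T) (X : ℝ → Ξ → E)
    (hmeas : ∀ s ∈ Icc 0 T, ∀ t ∈ Icc 0 T, Measurable fun ω => dist (X s ω) (X t ω))
    (hcont : ∀ t ∈ Ico 0 T, ∀ ε > 0,
      Tendsto (fun s => Q {ω | ε < dist (X s ω) (X t ω)}) (𝓝[>] t) (𝓝 0))
    (δ θ : ℝ → ℝ) (hδ_mono : MonotoneOn δ (Icc 0 T)) (hδ_nonneg : ∀ u ∈ Icc 0 T, 0 ≤ δ u)
    (hθ_mono : MonotoneOn θ (Icc 0 (max T 1))) (hθ_nonneg : ∀ u ∈ Icc 0 (max T 1), 0 ≤ θ u)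
    (hθ : ConcaveOn ℝ (Icc 0 (max T 1)) θ)
    (hgap : ∀ s t u : ℝ, 0 ≤ s → s ≤ t → t ≤ u → u ≤ T → ∀ A : Set Ξ, MeasurableSet A →
      ∫⁻ ω in A, ENNReal.ofReal (min (dist (X s ω) (X t ω)) (dist (X t ω) (X u ω))) ∂Q ≤
        ENNReal.ofReal (δ (u - s) * θ (Q A).toReal))
    (hint : ∫⁻ u in Ioc 0 T, ENNReal.ofReal (δ u * θ u / u ^ 2) < ∞) :
    ∃ X' : ℝ → Ξ → E,
      (∀ ω, (∀ t ∈ Ico 0 T, Tendsto (fun s => X' s ω) (𝓝[Ioc t T] t) (𝓝 (X' t ω))) ∧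
        ∀ t ∈ Ioc 0 T, ∃ L, Tendsto (fun s => X' s ω) (𝓝[Ico 0 t] t) (𝓝 L)) ∧
      ∀ t ∈ Icc 0 T, ∀ᵐ ω ∂Q, dist (X t ω) (X' t ω) = 0 := by
  simp only [← tripleGap_eq_ofReal] at hgap
  have hθQ (A : Set Ξ) : 0 ≤ θ (Q.real A) :=
    hθ_nonneg _ ⟨measureReal_nonneg, le_max_of_le_right measureReal_le_one⟩
  have hclamp {t : ℝ} (ht : 0 ≤ t) : min t T ∈ Icc 0 T := ⟨le_min ht hT.le, min_le_right t T⟩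
  have hsum : ∀ᵐ ω ∂Q, ∑' n, consecutiveGap (dyadicSample (fun t => X (min t T) ω) (T / 4) n) ≠ ∞ :=
    ae_tsum_consecutiveGap_ne_top (Y := fun t => X (min t T)) hT
      (fun t ht => by rw [min_eq_right ht, min_self])
      (fun s hs t ht => by
        simpa only [edist_dist] using (hmeas _ (hclamp hs) _ (hclamp ht)).ennreal_ofReal)
      hδ_mono hδ_nonneg hθ_mono hθ_nonneg hθ
      (fun s t u hs hst htu hus A hA => setLIntegral_tripleGap_comp_min_le hT.le hδ_mono (hθQ A)
        (fun s t u hs hst htu hu => hgap s t u hs hst htu hu A hA) hs hst htu hus)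
      hint.ne
  obtain ⟨Z, hZ, hXZ⟩ := exists_isCadlagOn_ae_inseparable (by positivity)
    (fun t ht => tendstoInMeasure_comp_min fun htT =>
      tendstoInMeasure_of_forall_tendsto_dist (hcont t ⟨ht, htT⟩)) hsum
  refine ⟨Z, fun ω => ⟨fun t ht => ?_, fun t ht => (hZ ω).exists_tendsto_left t ht.1.le⟩,
    fun t ht => ?_⟩
  · exact ((hZ ω).tendsto_right t ht.1).mono_left
      (nhdsWithin_mono t fun s hs => ⟨ht.1.trans hs.1.le, hs.1⟩)
  · simpa only [min_eq_left ht.2, Metric.inseparable_iff] using hXZ t ht.1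

/-- **Theorem (càdlàg modification criterion, Bezandry–Fernique type).**
Let `(Ξ, 𝒢, ℚ)` be a complete probability space, `(E, Δ)` a complete metric space,
`T > 0`, and `X = (X_t)_{t∈[0,T]}` a family of functions `X_t : Ξ → E` such that
`ω ↦ dist (X s ω) (X t ω)` is measurable for all `s, t ∈ [0,T]` and `X` is continuous
in probability.  If there exist continuous increasing `δ : [0,T] → [0,∞)` and concave
continuous increasing `θ : [0, T ∨ 1] → [0,∞)` with `δ 0 = θ 0 = 0` such that
`E[min(Δ(X_s,X_t), Δ(X_t,X_u)) ⬝ 1_A] ≤ δ(u−s)·θ(ℚ A)` for all `0 ≤ s ≤ t ≤ u ≤ T`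
and `A ∈ 𝒢`, and `∫₀^T u⁻² δ(u) θ(u) du < ∞`, then `X` has a càdlàg modification. -/
theorem cadlag_modification
    {Ξ : Type*} [MeasurableSpace Ξ] (Q : Measure Ξ) [IsProbabilityMeasure Q]
    (hQcomplete : Q.IsComplete)
    {E : Type*} [MetricSpace E] [CompleteSpace E]
    (T : ℝ) (hT : 0 < T)
    (X : ℝ → Ξ → E)
    (hmeas : ∀ s ∈ Set.Icc (0 : ℝ) T, ∀ t ∈ Set.Icc (0 : ℝ) T,
      Measurable fun ω => dist (X s ω) (X t ω))
    (hcontP : ∀ t ∈ Set.Icc (0 : ℝ) T, ∀ ε > (0 : ℝ),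
      Tendsto (fun s => Q {ω | ε < dist (X s ω) (X t ω)})
        (nhdsWithin t (Set.Icc (0 : ℝ) T)) (nhds 0))
    (δ θ : ℝ → ℝ)
    (hδcont : ContinuousOn δ (Set.Icc 0 T)) (hδmono : MonotoneOn δ (Set.Icc 0 T))
    (hδ0 : δ 0 = 0) (hδnonneg : ∀ u ∈ Set.Icc (0 : ℝ) T, 0 ≤ δ u)
    (hθcont : ContinuousOn θ (Set.Icc 0 (max T 1)))
    (hθmono : MonotoneOn θ (Set.Icc 0 (max T 1)))
    (hθ0 : θ 0 = 0) (hθnonneg : ∀ u ∈ Set.Icc (0 : ℝ) (max T 1), 0 ≤ θ u)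
    (hθconcave : ConcaveOn ℝ (Set.Icc 0 (max T 1)) θ)
    (hineq : ∀ s t u : ℝ, 0 ≤ s → s ≤ t → t ≤ u → u ≤ T →
      ∀ A : Set Ξ, MeasurableSet A →
        ∫⁻ ω in A,
            ENNReal.ofReal (min (dist (X s ω) (X t ω)) (dist (X t ω) (X u ω))) ∂Q
          ≤ ENNReal.ofReal (δ (u - s) * θ (Q A).toReal))
    (hint : ∫⁻ u in Set.Ioc (0 : ℝ) T, ENNReal.ofReal (δ u * θ u / u ^ 2) < ⊤) :
    ∃ X' : ℝ → Ξ → E,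
      (∀ ω : Ξ,
        (∀ t ∈ Set.Ico (0 : ℝ) T,
          Tendsto (fun s => X' s ω) (nhdsWithin t (Set.Ioc t T)) (nhds (X' t ω))) ∧
        (∀ t ∈ Set.Ioc (0 : ℝ) T, ∃ L : E,
          Tendsto (fun s => X' s ω) (nhdsWithin t (Set.Ico 0 t)) (nhds L))) ∧
      (∀ t ∈ Set.Icc (0 : ℝ) T, ∀ᵐ ω ∂Q, dist (X t ω) (X' t ω) = 0) := by
  exact cadlag_modification_general Q hT X hmeas
    (fun t ht ε hε => (hcontP t (Ico_subset_Icc_self ht) ε hε).mono_left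
      (nhdsWithin_le_of_mem (Icc_mem_nhdsGT_of_mem ht)))
    δ θ hδmono hδnonneg hθmono hθnonneg hθconcave hineq hint
end

section
/- Let (Ξ, 𝒢, ℚ) be a complete probability space, (E, Δ) a complete metric space, T > 0, and X = (X_t)_{t∈[0,T]} a family of functions X_t: Ξ → E such that ω ↦ Δ(X_s(ω), X_t(ω)) is 𝒢-measurable for all s, t ∈ [0,T] and X is continuous in probability. If there exist q > 1/2, r > 0 and C > 0 such that E_ℚ[Δ(X_s, X_t)^q · Δ(X_t, X_u)^q] ≤ C |u−s|^{1+r} for all 0 ≤ s ≤ t ≤ u ≤ T, then X has a càdlàg modification, i.e. a family X′ = (X′_t)_{t∈[0,T]} such that every path t ↦ X′_t(ω) is right-continuous with left limits on [0,T] and, for each t ∈ [0,T], Δ(X_t, X′_t) = 0 ℚ-a.s. -/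
open MeasureTheory Filter Set Topology

/-!
Markov's inequality turns the moment condition into a tail bound for the smaller of the two
distances `Δ(X_s, X_t)` and `Δ(X_t, X_u)`. As the exponent of `u - s` exceeds `1`, the bounds for
consecutive triples of the grid of mesh `2⁻ⁿ` at a threshold `θⁿ`, with `θ < 1` close to `1`, are
summable over the whole grid and over `n`. By Borel–Cantelli, almost every path eventually has one
small increment in each consecutive triple, so each odd grid point can be moved to a neighbour on
the coarser grid at cost `θⁿ`. Chaining these moves monotonically from fine grids to a coarse one
shows that, on the dyadics, short triples never see two large jumps; hence one-sided limits along
the dyadics exist. The right limits form a càdlàg path, and right-continuity in probability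
identifies it almost surely with `X_t` at each fixed `t`.
-/

/-- Billingsley's functional of three consecutive values of a path: the distance from the middle
value to the nearer of the outer ones. A single jump leaves it small. -/
noncomputable def middleDist {E : Type*} [PseudoMetricSpace E] (x y z : E) : ℝ :=
  min (dist x y) (dist y z)

section MiddleDist

variable {E : Type*} [PseudoMetricSpace E]

lemma middleDist_nonneg (x y z : E) : 0 ≤ middleDist x y z :=
  le_min dist_nonneg dist_nonneg

lemma middleDist_comm (x y z : E) : middleDist x y z = middleDist z y x := by
  rw [middleDist, middleDist, min_comm, dist_comm y z, dist_comm x y]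

@[simp]
lemma middleDist_self_left (x z : E) : middleDist x x z = 0 := by
  simp [middleDist]

@[simp]
lemma middleDist_self_right (x y : E) : middleDist x y y = 0 := by
  simp [middleDist]

lemma middleDist_le_add_two_mul {x y z x' y' z' : E} {κ : ℝ} (hx : dist x x' ≤ κ)
    (hy : dist y y' ≤ κ) (hz : dist z z' ≤ κ) :
    middleDist x y z ≤ middleDist x' y' z' + 2 * κ := by
  rw [middleDist, middleDist, ← min_add_add_right]
  refine min_le_min ?_ ?_
  · linarith [dist_triangle4_right x y x' y']
  · linarith [dist_triangle4_right y z y' z']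

end MiddleDist

section Coarsening

variable {E : Type*} [PseudoMetricSpace E]

lemma middleDist_le_of_le_add_two {g : ℤ → E} {c : ℝ}
    (h : ∀ k, middleDist (g k) (g (k + 1)) (g (k + 2)) ≤ c) {i j k : ℤ}
    (hij : i ≤ j) (hjk : j ≤ k) (hki : k ≤ i + 2) : middleDist (g i) (g j) (g k) ≤ c := by
  have hc : 0 ≤ c := (middleDist_nonneg _ _ _).trans (h 0)
  rcases hij.eq_or_lt with rfl | hij
  · rwa [middleDist_self_left]
  rcases hjk.eq_or_lt with rfl | hjk
  · rwa [middleDist_self_right]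
  obtain rfl : j = i + 1 := by omega
  obtain rfl : k = i + 2 := by omega
  exact h i

lemma exists_monotone_even_near {g : ℤ → E} {c : ℝ}
    (h : ∀ k, middleDist (g k) (g (k + 1)) (g (k + 2)) ≤ c) :
    ∃ φ : ℤ → ℤ, Monotone φ ∧ ∀ p, dist (g p) (g (2 * φ p)) ≤ c ∧ |2 * φ p - p| ≤ 1 := by
  have hc : 0 ≤ c := (middleDist_nonneg _ _ _).trans (h 0)
  have near_even : ∀ p, ∃ a, dist (g p) (g (2 * a)) ≤ c ∧ |2 * a - p| ≤ 1 := by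
    intro p
    rcases Int.even_or_odd' p with ⟨k, rfl | rfl⟩
    · exact ⟨k, by simpa using hc, by simp⟩
    · rcases min_le_iff.1 (h (2 * k)) with hk | hk
      · exact ⟨k, by rwa [dist_comm], by simp⟩
      · exact ⟨k + 1, by rwa [mul_add], by ring_nf; simp⟩
  choose φ hφ using near_even
  refine ⟨φ, monotone_int_of_le_succ fun p => ?_, hφ⟩
  have h₀ := abs_le.1 (hφ p).2
  have h₁ := abs_le.1 (hφ (p + 1)).2
  omega

variable {g : ℕ → ℤ → E} {c : ℕ → ℝ} {n : ℕ}

lemma exists_monotone_coarsening (hg : ∀ m k, g (m + 1) (2 * k) = g m k)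
    (h : ∀ m ≥ n, ∀ k, middleDist (g m k) (g m (k + 1)) (g m (k + 2)) ≤ c m) (j : ℕ) :
    ∃ φ : ℤ → ℤ, Monotone φ ∧ ∀ p,
      dist (g (n + j) p) (g n (φ p)) ≤ ∑ i ∈ Finset.range j, c (n + (i + 1)) ∧
      |2 ^ j * φ p - p| ≤ 2 ^ j - 1 := by
  induction j with
  | zero => exact ⟨id, monotone_id, by simp⟩
  | succ j ih =>
    obtain ⟨φ, hφ, hφ_near⟩ := ih
    obtain ⟨ψ, hψ, hψ_near⟩ := exists_monotone_even_near (h (n + (j + 1)) (by omega))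
    refine ⟨φ ∘ ψ, hφ.comp hψ, fun p => ⟨?_, ?_⟩⟩
    · have hstep := (hψ_near p).1
      rw [show g (n + (j + 1)) (2 * ψ p) = g (n + j) (ψ p) from hg _ _] at hstep
      rw [Finset.sum_range_succ, Function.comp_apply]
      linarith [dist_triangle (g (n + (j + 1)) p) (g (n + j) (ψ p)) (g n (φ (ψ p))),
        (hφ_near (ψ p)).1]
    · have h₁ := abs_le.1 (hφ_near (ψ p)).2
      have h₂ := abs_le.1 (hψ_near p).2
      simp only [Function.comp_apply, pow_succ, abs_le]
      constructor <;> linarith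

lemma middleDist_le_two_mul_tsum (hg : ∀ m k, g (m + 1) (2 * k) = g m k) (hc : Summable c)
    (h : ∀ m ≥ n, ∀ k, middleDist (g m k) (g m (k + 1)) (g m (k + 2)) ≤ c m)
    {j : ℕ} {p p' p'' : ℤ} (hpp' : p ≤ p') (hp'p'' : p' ≤ p'') (hp''p : p'' ≤ p + 2 ^ j) :
    middleDist (g (n + j) p) (g (n + j) p') (g (n + j) p'') ≤ 2 * ∑' i, c (n + i) := by
  have hc_nonneg : ∀ m ≥ n, 0 ≤ c m := fun m hm => (middleDist_nonneg _ _ _).trans (h m hm 0)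
  obtain ⟨φ, hφ, hφ_near⟩ := exists_monotone_coarsening hg h j
  have hφ_le : φ p'' ≤ φ p + 2 := by
    have h₁ := abs_le.1 (hφ_near p).2
    have h₂ := abs_le.1 (hφ_near p'').2
    have : 2 ^ j * φ p'' < 2 ^ j * (φ p + 3) := by linarith
    linarith [lt_of_mul_lt_mul_left this (by positivity)]
  have hcoarse : middleDist (g n (φ p)) (g n (φ p')) (g n (φ p'')) ≤ c n :=
    middleDist_le_of_le_add_two (h n le_rfl) (hφ hpp') (hφ hp'p'') hφ_le
  have hpartial : ∑ i ∈ Finset.range (j + 1), c (n + i) ≤ ∑' i, c (n + i) :=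
    ((summable_nat_add_iff n).2 hc |>.congr fun i => by rw [add_comm]).sum_le_tsum _
      fun i _ => hc_nonneg _ (by omega)
  rw [Finset.sum_range_succ', add_zero] at hpartial
  linarith [middleDist_le_add_two_mul (hφ_near p).1 (hφ_near p').1 (hφ_near p'').1,
    hc_nonneg n le_rfl]

end Coarsening

/-- The point `k / 2 ^ n` of the dyadic grid of mesh `2⁻ⁿ`. -/
noncomputable def dyadicPoint (n : ℕ) (k : ℤ) : ℝ := k / 2 ^ n

/-- The set of dyadic rationals, as real numbers. -/
def dyadics : Set ℝ := {x | ∃ n k, dyadicPoint n k = x}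

section Dyadics

lemma dyadicPoint_le_dyadicPoint {n : ℕ} {k l : ℤ} :
    dyadicPoint n k ≤ dyadicPoint n l ↔ k ≤ l := by
  rw [dyadicPoint, dyadicPoint, div_le_div_iff_of_pos_right (by positivity), Int.cast_le]

lemma dyadicPoint_sub_dyadicPoint (n : ℕ) (k l : ℤ) :
    dyadicPoint n k - dyadicPoint n l = dyadicPoint n (k - l) := by
  simp only [dyadicPoint, Int.cast_sub, sub_div]

lemma dyadicPoint_add_mul_two_pow (n j : ℕ) (k : ℤ) :
    dyadicPoint (n + j) (k * 2 ^ j) = dyadicPoint n k := by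
  rw [dyadicPoint, dyadicPoint, pow_add]
  push_cast
  exact mul_div_mul_right _ _ (by positivity)

lemma eventually_exists_dyadicPoint_eq {x : ℝ} (hx : x ∈ dyadics) :
    ∀ᶠ n in atTop, ∃ k, dyadicPoint n k = x := by
  obtain ⟨n, k, rfl⟩ := hx
  filter_upwards [eventually_ge_atTop n] with m hm
  obtain ⟨j, rfl⟩ := Nat.exists_eq_add_of_le hm
  exact ⟨k * 2 ^ j, dyadicPoint_add_mul_two_pow n j k⟩

lemma dense_dyadics : Dense dyadics := by
  refine dense_iff_exists_between.2 fun a b hab => ?_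
  obtain ⟨n, hn⟩ := pow_unbounded_of_one_lt (1 / (b - a)) one_lt_two
  have hpow : (0 : ℝ) < 2 ^ n := by positivity
  rw [div_lt_iff₀ (sub_pos.2 hab)] at hn
  refine ⟨dyadicPoint n (⌊a * 2 ^ n⌋ + 1), ⟨n, _, rfl⟩, ?_, ?_⟩ <;>
    simp only [dyadicPoint, Int.cast_add, Int.cast_one]
  · exact (lt_div_iff₀ hpow).2 (Int.lt_floor_add_one _)
  · rw [div_lt_iff₀ hpow]
    linarith [Int.floor_le (a * 2 ^ n)]

end Dyadics

/-- `z` is uniformly regulated on `D`: on short triples of points of `D`, the middle value of `z`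
is uniformly close to one of the outer values. This is the vanishing, as `δ → 0`, of Billingsley's
càdlàg modulus `w''(z, δ)`, with time restricted to `D`. -/
def UniformlyRegulatedOn {E : Type*} [PseudoMetricSpace E] (z : ℝ → E) (D : Set ℝ) : Prop :=
  ∀ ε > 0, ∃ δ > 0, ∀ s ∈ D, ∀ t ∈ D, ∀ u ∈ D, s ≤ t → t ≤ u → u - s ≤ δ →
    middleDist (z s) (z t) (z u) ≤ ε

lemma uniformlyRegulatedOn_dyadics {E : Type*} [PseudoMetricSpace E] {z : ℝ → E} {c : ℕ → ℝ}
    (hc : Summable c)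
    (h : ∀ᶠ n in atTop, ∀ k, middleDist (z (dyadicPoint n k)) (z (dyadicPoint n (k + 1)))
      (z (dyadicPoint n (k + 2))) ≤ c n) :
    UniformlyRegulatedOn z dyadics := by
  intro ε hε
  have htail : Tendsto (fun n => 2 * ∑' i, c (n + i)) atTop (𝓝 0) := by
    simpa only [add_comm, mul_zero] using (tendsto_sum_nat_add c).const_mul 2
  obtain ⟨n, hn, hnε⟩ :=
    ((eventually_forall_ge_atTop.2 h).and (htail.eventually_le_const hε)).exists
  refine ⟨dyadicPoint n 1, by simp [dyadicPoint], fun s hs t ht u hu hst htu hus => ?_⟩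
  obtain ⟨m, hnm, ⟨a, rfl⟩, ⟨b, rfl⟩, ⟨d, rfl⟩⟩ :=
    ((eventually_ge_atTop n).and ((eventually_exists_dyadicPoint_eq hs).and
      ((eventually_exists_dyadicPoint_eq ht).and (eventually_exists_dyadicPoint_eq hu)))).exists
  obtain ⟨j, rfl⟩ := Nat.exists_eq_add_of_le hnm
  rw [dyadicPoint_sub_dyadicPoint, ← dyadicPoint_add_mul_two_pow n j 1, one_mul] at hus
  rw [dyadicPoint_le_dyadicPoint] at hst htu hus
  have hgrid : ∀ m k, z (dyadicPoint (m + 1) (2 * k)) = z (dyadicPoint m k) := fun m k => by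
    rw [← dyadicPoint_add_mul_two_pow m 1 k, pow_one, mul_comm]
  exact (middleDist_le_two_mul_tsum (g := fun m k => z (dyadicPoint m k)) hgrid hc hn
    hst htu (by linarith)).trans hnε

section OneSidedLimits

variable {E : Type*} [PseudoMetricSpace E] {z : ℝ → E} {D : Set ℝ}

lemma UniformlyRegulatedOn.comp_neg (hz : UniformlyRegulatedOn z D) :
    UniformlyRegulatedOn (fun t => z (-t)) (Neg.neg ⁻¹' D) := by
  intro ε hε
  obtain ⟨δ, hδ, h⟩ := hz ε hε
  refine ⟨δ, hδ, fun s hs t ht u hu hst htu hus => ?_⟩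
  rw [middleDist_comm]
  exact h (-u) hu (-t) ht (-s) hs (by linarith) (by linarith) (by linarith)

lemma UniformlyRegulatedOn.exists_dist_le_right (hz : UniformlyRegulatedOn z D) (t : ℝ) {ε : ℝ}
    (hε : 0 < ε) :
    ∃ b > t, ∀ x ∈ Ioo t b ∩ D, ∀ y ∈ Ioo t b ∩ D, dist (z x) (z y) ≤ ε := by
  obtain ⟨δ, hδ, h⟩ := hz (ε / 2) (by positivity)
  -- A jump of `z` between two points `a ≤ b` just after `t` forces `z` to be close to `z a` on
  -- all of `(t, a)`.
  by_cases! hjump : ∃ a ∈ Ioo t (t + δ) ∩ D, ∃ b ∈ Ioo t (t + δ) ∩ D,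
      a ≤ b ∧ ε < dist (z a) (z b)
  · obtain ⟨a, ⟨⟨hta, -⟩, ha⟩, b, ⟨⟨-, hbt⟩, hb⟩, hab, hdist⟩ := hjump
    have near_a : ∀ x ∈ Ioo t a ∩ D, dist (z x) (z a) ≤ ε / 2 := by
      rintro x ⟨⟨htx, hxa⟩, hx⟩
      have hxab := h x hx a ha b hb hxa.le hab (by linarith)
      exact (min_le_iff.1 hxab).resolve_right (by linarith)
    refine ⟨a, hta, fun x hx y hy => ?_⟩
    linarith [dist_triangle_right (z x) (z y) (z a), near_a x hx, near_a y hy]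
  · refine ⟨t + δ, by linarith, fun x hx y hy => ?_⟩
    rcases le_total x y with hxy | hyx
    · exact hjump x hx y hy hxy
    · exact dist_comm (z x) (z y) ▸ hjump y hy x hx hyx

variable [CompleteSpace E]

lemma UniformlyRegulatedOn.exists_tendsto_right (hz : UniformlyRegulatedOn z D) (t : ℝ) :
    ∃ l, Tendsto z (𝓝[Ioi t ∩ D] t) (𝓝 l) := by
  rcases eq_or_neBot (𝓝[Ioi t ∩ D] t) with hbot | hne
  · exact ⟨z t, hbot ▸ tendsto_bot⟩
  refine cauchy_map_iff_exists_tendsto.1 (Metric.cauchy_iff.2 ⟨inferInstance, fun ε hε => ?_⟩)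
  obtain ⟨b, hb, h⟩ := hz.exists_dist_le_right t (half_pos hε)
  have hmem : Ioo t b ∩ D ∈ 𝓝[Ioi t ∩ D] t := by
    filter_upwards [self_mem_nhdsWithin, mem_nhdsWithin_of_mem_nhds (Iio_mem_nhds hb)]
      with x hx hxb using ⟨⟨hx.1, hxb⟩, hx.2⟩
  refine ⟨z '' (Ioo t b ∩ D), image_mem_map hmem, ?_⟩
  rintro _ ⟨x, hx, rfl⟩ _ ⟨y, hy, rfl⟩
  linarith [h x hx y hy]

lemma UniformlyRegulatedOn.exists_tendsto_left (hz : UniformlyRegulatedOn z D) (t : ℝ) :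
    ∃ l, Tendsto z (𝓝[Iio t ∩ D] t) (𝓝 l) := by
  obtain ⟨l, hl⟩ := hz.comp_neg.exists_tendsto_right (-t)
  have hneg : Tendsto Neg.neg (𝓝[Iio t ∩ D] t) (𝓝[Ioi (-t) ∩ Neg.neg ⁻¹' D] (-t)) :=
    continuous_neg.continuousWithinAt.tendsto_nhdsWithin
      fun x hx => ⟨neg_lt_neg (mem_Iio.1 hx.1), by simpa using hx.2⟩
  exact ⟨l, by simpa [Function.comp_def] using hl.comp hneg⟩

end OneSidedLimits

/-- A path on the real line is càdlàg if it is right-continuous and has left limits. -/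
def IsCadlag {E : Type*} [TopologicalSpace E] (f : ℝ → E) : Prop :=
  (∀ t, Tendsto f (𝓝[>] t) (𝓝 (f t))) ∧ ∀ t, ∃ l, Tendsto f (𝓝[<] t) (𝓝 l)

section Cadlag

variable {E : Type*} [TopologicalSpace E] {f : ℝ → E}

lemma isCadlag_const (x : E) : IsCadlag fun _ => x :=
  ⟨fun _ => tendsto_const_nhds, fun _ => ⟨x, tendsto_const_nhds⟩⟩

lemma IsCadlag.tendsto_Ioc (hf : IsCadlag f) (t b : ℝ) : Tendsto f (𝓝[Ioc t b] t) (𝓝 (f t)) :=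
  (hf.1 t).mono_left (nhdsWithin_mono t Ioc_subset_Ioi_self)

lemma IsCadlag.exists_tendsto_Ico (hf : IsCadlag f) (a t : ℝ) :
    ∃ l, Tendsto f (𝓝[Ico a t] t) (𝓝 l) :=
  (hf.2 t).imp fun _ hl => hl.mono_left (nhdsWithin_mono t Ico_subset_Iio_self)

lemma neBot_nhdsWithin_Ioi_inter {D : Set ℝ} (hD : Dense D) (t : ℝ) :
    (𝓝[Ioi t ∩ D] t).NeBot := by
  rw [← mem_closure_iff_nhdsWithin_neBot, ← closure_closure]
  refine closure_mono (hD.open_subset_closure_inter isOpen_Ioi) ?_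
  rw [closure_Ioi]
  exact self_mem_Ici

lemma tendsto_nhdsWithin_of_tendsto_right [RegularSpace E] {D U : Set ℝ} (hD : Dense D)
    (hU : IsOpen U) {z y : ℝ → E} (hy : ∀ s, Tendsto z (𝓝[Ioi s ∩ D] s) (𝓝 (y s)))
    {t : ℝ} {l : E} (hz : Tendsto z (𝓝[U ∩ D] t) (𝓝 l)) : Tendsto y (𝓝[U] t) (𝓝 l) := by
  refine (closed_nhds_basis l).tendsto_right_iff.2 fun K hK => ?_
  have hzK : ∀ᶠ s in 𝓝 t, ∀ᶠ x in 𝓝 s, x ∈ U ∩ D → z x ∈ K :=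
    eventually_eventually_nhds.2 (eventually_nhdsWithin_iff.1 (hz hK.1))
  filter_upwards [self_mem_nhdsWithin, hzK.filter_mono nhdsWithin_le_nhds] with s hsU hs
  have := neBot_nhdsWithin_Ioi_inter hD s
  refine hK.2.mem_of_tendsto (hy s) ?_
  filter_upwards [self_mem_nhdsWithin, nhdsWithin_le_nhds hs,
    nhdsWithin_le_nhds (hU.mem_nhds hsU)] with x hx hxK hxU using hxK ⟨hxU, hx.2⟩

end Cadlag

lemma UniformlyRegulatedOn.exists_isCadlag {E : Type*} [PseudoMetricSpace E] [CompleteSpace E]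
    {z : ℝ → E} {D : Set ℝ} (hz : UniformlyRegulatedOn z D) (hD : Dense D) :
    ∃ y, IsCadlag y ∧ ∀ t, Tendsto z (𝓝[Ioi t ∩ D] t) (𝓝 (y t)) := by
  choose y hy using hz.exists_tendsto_right
  refine ⟨y, ⟨fun t => ?_, fun t => ?_⟩, hy⟩
  · exact tendsto_nhdsWithin_of_tendsto_right hD isOpen_Ioi hy (hy t)
  · exact (hz.exists_tendsto_left t).imp fun l hl =>
      tendsto_nhdsWithin_of_tendsto_right hD isOpen_Iio hy hl

section Modification

variable {Ξ : Type*} [MeasurableSpace Ξ] {Q : Measure Ξ} {E : Type*} [PseudoMetricSpace E]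

lemma tendstoInMeasure_of_tendsto_measure_lt_dist {ι : Type*} {f : ι → Ξ → E} {l : Filter ι}
    {g : Ξ → E}
    (h : ∀ ε > 0, Tendsto (fun i => Q {ω | ε < dist (f i ω) (g ω)}) l (𝓝 0)) :
    TendstoInMeasure Q f l g := by
  refine tendstoInMeasure_iff_dist.2 fun ε hε => ?_
  refine tendsto_of_tendsto_of_tendsto_of_le_of_le tendsto_const_nhds (h (ε / 2) (half_pos hε))
    (fun _ => zero_le) fun i => measure_mono fun ω hω => (half_lt_self hε).trans_le hω

theorem exists_isCadlag_modification_of_ae_uniformlyRegulatedOn [CompleteSpace E]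
    {Z : ℝ → Ξ → E} {D : Set ℝ} (hD : Dense D)
    (hreg : ∀ᵐ ω ∂Q, UniformlyRegulatedOn (Z · ω) D)
    (hcont : ∀ t, TendstoInMeasure Q Z (𝓝[>] t) (Z t)) :
    ∃ Y : ℝ → Ξ → E, (∀ ω, IsCadlag (Y · ω)) ∧ ∀ t, ∀ᵐ ω ∂Q, dist (Z t ω) (Y t ω) = 0 := by
  have hpath : ∀ ω, ∃ y, IsCadlag y ∧ (UniformlyRegulatedOn (Z · ω) D →
      ∀ t, Tendsto (Z · ω) (𝓝[Ioi t ∩ D] t) (𝓝 (y t))) := by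
    intro ω
    by_cases hω : UniformlyRegulatedOn (Z · ω) D
    · exact (hω.exists_isCadlag hD).imp fun y hy => ⟨hy.1, fun _ => hy.2⟩
    · exact ⟨fun _ => Z 0 ω, isCadlag_const _, fun h => absurd h hω⟩
  choose y hy_cadlag hy_lim using hpath
  refine ⟨fun t ω => y ω t, hy_cadlag, fun t => ?_⟩
  have := neBot_nhdsWithin_Ioi_inter hD t
  obtain ⟨s, hs, hZs⟩ :=
    ((hcont t).mono (nhdsWithin_mono t (inter_subset_left (t := D)))).exists_seq_tendsto_ae'
  filter_upwards [hZs, hreg] with ω hω hω_reg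
  exact tendsto_nhds_unique_dist hω ((hy_lim ω hω_reg t).comp hs)

end Modification

section TailBound

lemma exists_pos_lt_one_lt_rpow {x : ℝ} (hx : x < 1) (β : ℝ) :
    ∃ θ : ℝ, 0 < θ ∧ θ < 1 ∧ x < θ ^ β := by
  have hlim : Tendsto (fun θ : ℝ => θ ^ β) (𝓝[<] 1) (𝓝 1) := by
    simpa using (Real.continuousAt_rpow_const 1 β (Or.inl one_ne_zero)).tendsto.mono_left
      nhdsWithin_le_nhds
  obtain ⟨θ, hθ, hθx⟩ :=
    ((eventually_mem_set.2 (Ioo_mem_nhdsLT zero_lt_one)).and (hlim.eventually_const_lt hx)).exists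
  exact ⟨θ, hθ.1, hθ.2, hθx⟩

lemma exists_summable_two_pow_mul_rpow_div {α : ℝ} (hα : 1 < α) (β : ℝ) :
    ∃ θ : ℝ, 0 < θ ∧ θ < 1 ∧
      Summable fun n : ℕ => 2 ^ n * ((2 / 2 ^ n) ^ α / (θ ^ n) ^ β) := by
  have hα2 : (0 : ℝ) < 2 ^ α := by positivity
  have hratio : (2 : ℝ) / 2 ^ α < 1 :=
    (div_lt_one hα2).2 (Real.self_lt_rpow_of_one_lt one_lt_two hα)
  obtain ⟨θ, hθ0, hθ1, hθ⟩ := exists_pos_lt_one_lt_rpow hratio β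
  have hθβ : 0 < θ ^ β := by positivity
  refine ⟨θ, hθ0, hθ1, ?_⟩
  refine ((summable_geometric_of_lt_one (r := 2 / 2 ^ α / θ ^ β) (by positivity)
    ((div_lt_one hθβ).2 hθ)).mul_left (2 ^ α)).congr fun n => ?_
  rw [Real.div_rpow zero_le_two (by positivity), ← Real.rpow_pow_comm zero_le_two,
    ← Real.rpow_pow_comm hθ0.le, div_pow, div_pow]
  field_simp

variable {Ξ : Type*} [MeasurableSpace Ξ] {Q : Measure Ξ} {E : Type*} [PseudoMetricSpace E]
  {C α β : ℝ}

lemma measure_iUnion_dyadicPoint_lt_middleDist_le {Z : ℝ → Ξ → E} {c : ℝ}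
    (htail : ∀ s t u, s ≤ t → t ≤ u →
      Q {ω | c < middleDist (Z s ω) (Z t ω) (Z u ω)} ≤ ENNReal.ofReal (C * (u - s) ^ α / c ^ β))
    (M n : ℕ) :
    Q (⋃ k ∈ Finset.Ico (-(M * 2 ^ n) : ℤ) (M * 2 ^ n), {ω | c < middleDist
        (Z (dyadicPoint n k) ω) (Z (dyadicPoint n (k + 1)) ω) (Z (dyadicPoint n (k + 2)) ω)}) ≤
      ENNReal.ofReal (2 * M * C * (2 ^ n * ((2 / 2 ^ n) ^ α / c ^ β))) := by
  have hsingle : ∀ k, Q {ω | c < middleDist (Z (dyadicPoint n k) ω)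
      (Z (dyadicPoint n (k + 1)) ω) (Z (dyadicPoint n (k + 2)) ω)} ≤
      ENNReal.ofReal (C * (2 / 2 ^ n) ^ α / c ^ β) := by
    intro k
    refine (htail _ _ _ (dyadicPoint_le_dyadicPoint.2 (by omega))
      (dyadicPoint_le_dyadicPoint.2 (by omega))).trans_eq ?_
    rw [dyadicPoint_sub_dyadicPoint, add_sub_cancel_left, dyadicPoint, Int.cast_ofNat]
  have hcard : (Finset.Ico (-(M * 2 ^ n) : ℤ) (M * 2 ^ n)).card = 2 * M * 2 ^ n := by
    rw [Int.card_Ico]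
    lia
  refine (measure_biUnion_finset_le _ _).trans <|
    (Finset.sum_le_sum fun k _ => hsingle k).trans_eq ?_
  rw [Finset.sum_const, hcard, nsmul_eq_mul, ← ENNReal.ofReal_natCast,
    ← ENNReal.ofReal_mul (by positivity)]
  push_cast
  congr 1
  ring

lemma middleDist_dyadicPoint_eq_zero {z : ℝ → E} {M : ℕ}
    (hleft : ∀ t ≤ (-M : ℝ), z t = z (-M)) (hright : ∀ t ≥ (M : ℝ), z t = z M) {n : ℕ} {k : ℤ}
    (hk : k ∉ Finset.Ico (-(M * 2 ^ n) : ℤ) (M * 2 ^ n)) :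
    middleDist (z (dyadicPoint n k)) (z (dyadicPoint n (k + 1))) (z (dyadicPoint n (k + 2))) =
      0 := by
  have hconst : z (dyadicPoint n k) = z (dyadicPoint n (k + 1)) := by
    have hM_neg : dyadicPoint n (-(M * 2 ^ n)) = -M := by simp [dyadicPoint, neg_div]
    have hM : dyadicPoint n (M * 2 ^ n) = M := by simp [dyadicPoint]
    rcases lt_or_ge k (-(M * 2 ^ n)) with hk_lt | hk_ge
    · exact (hleft _ (hM_neg ▸ dyadicPoint_le_dyadicPoint.2 hk_lt.le)).trans
        (hleft _ (hM_neg ▸ dyadicPoint_le_dyadicPoint.2 (by omega))).symm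
    · have hk_le : M * 2 ^ n ≤ k := not_lt.1 fun hlt => hk (Finset.mem_Ico.2 ⟨hk_ge, hlt⟩)
      exact (hright _ (hM ▸ dyadicPoint_le_dyadicPoint.2 hk_le)).trans
        (hright _ (hM ▸ dyadicPoint_le_dyadicPoint.2 (by omega))).symm
  rw [hconst, middleDist_self_left]

theorem ae_uniformlyRegulatedOn_dyadics {Z : ℝ → Ξ → E} (hα : 1 < α)
    (htail : ∀ s t u, s ≤ t → t ≤ u → ∀ c > 0,
      Q {ω | c < middleDist (Z s ω) (Z t ω) (Z u ω)} ≤ ENNReal.ofReal (C * (u - s) ^ α / c ^ β))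
    {M : ℕ} (hleft : ∀ t ≤ (-M : ℝ), Z t = Z (-M)) (hright : ∀ t ≥ (M : ℝ), Z t = Z M) :
    ∀ᵐ ω ∂Q, UniformlyRegulatedOn (Z · ω) dyadics := by
  obtain ⟨θ, hθ0, hθ1, hsum⟩ := exists_summable_two_pow_mul_rpow_div hα β
  have hBorelCantelli := ae_eventually_notMem <| ne_top_of_le_ne_top
    (hsum.mul_left (2 * M * C)).tsum_ofReal_ne_top <| ENNReal.tsum_le_tsum fun n =>
      measure_iUnion_dyadicPoint_lt_middleDist_le
        (fun s t u hst htu => htail s t u hst htu (θ ^ n) (pow_pos hθ0 n)) M n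
  filter_upwards [hBorelCantelli] with ω hω
  refine uniformlyRegulatedOn_dyadics (summable_geometric_of_lt_one hθ0.le hθ1) ?_
  filter_upwards [hω] with n hn k
  by_cases hk : k ∈ Finset.Ico (-(M * 2 ^ n) : ℤ) (M * 2 ^ n)
  · simp only [mem_iUnion, not_exists] at hn
    exact not_lt.1 (hn k hk)
  · rw [middleDist_dyadicPoint_eq_zero (fun t ht => congrFun (hleft t ht) ω)
      (fun t ht => congrFun (hright t ht) ω) hk]
    positivity

lemma tendsto_projIcc_nhdsGT {a b : ℝ} (hab : a ≤ b) (t : ℝ) :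
    Tendsto (fun s => (projIcc a b hab s : ℝ)) (𝓝[>] t)
      (𝓝[Icc ↑(projIcc a b hab t) b] ↑(projIcc a b hab t)) :=
  (continuous_subtype_val.comp continuous_projIcc).continuousWithinAt.tendsto_nhdsWithin
    fun s hs => ⟨monotone_projIcc hab (le_of_lt hs), (projIcc a b hab s).2.2⟩

lemma projIcc_sub_projIcc_le {a b : ℝ} (hab : a ≤ b) {s t : ℝ} (hst : s ≤ t) :
    (projIcc a b hab t - projIcc a b hab s : ℝ) ≤ t - s :=
  (le_abs_self _).trans <| abs_of_nonneg (sub_nonneg.2 hst) ▸ abs_projIcc_sub_projIcc hab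

theorem exists_isCadlag_modification_of_tail_bound [CompleteSpace E] {a b : ℝ} (hab : a ≤ b)
    {X : ℝ → Ξ → E} (hC : 0 ≤ C) (hα : 1 < α)
    (htail : ∀ s t u, a ≤ s → s ≤ t → t ≤ u → u ≤ b → ∀ c > 0,
      Q {ω | c < middleDist (X s ω) (X t ω) (X u ω)} ≤ ENNReal.ofReal (C * (u - s) ^ α / c ^ β))
    (hcont : ∀ t ∈ Icc a b, TendstoInMeasure Q X (𝓝[Icc t b] t) (X t)) :
    ∃ Y : ℝ → Ξ → E, (∀ ω, IsCadlag (Y · ω)) ∧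
      ∀ t ∈ Icc a b, ∀ᵐ ω ∂Q, dist (X t ω) (Y t ω) = 0 := by
  set p : ℝ → ℝ := fun t => projIcc a b hab t
  have hp_mem : ∀ t, p t ∈ Icc a b := fun t => (projIcc a b hab t).2
  have hp_mono : Monotone p := monotone_projIcc hab
  have htail_p : ∀ s t u, s ≤ t → t ≤ u → ∀ c > 0,
      Q {ω | c < middleDist (X (p s) ω) (X (p t) ω) (X (p u) ω)} ≤
        ENNReal.ofReal (C * (u - s) ^ α / c ^ β) := by
    intro s t u hst htu c hc
    refine (htail _ _ _ (hp_mem s).1 (hp_mono hst) (hp_mono htu) (hp_mem u).2 c hc).trans ?_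
    have hp_nonneg : 0 ≤ p u - p s := sub_nonneg.2 (hp_mono (hst.trans htu))
    have hp_le : p u - p s ≤ u - s := projIcc_sub_projIcc_le hab (hst.trans htu)
    gcongr
  -- The process stopped outside `[a, b]` has only finitely many nontrivial triples per grid.
  obtain ⟨M, hM⟩ := exists_nat_ge (max (-a) b)
  have haM : -M ≤ a := by linarith [le_max_left (-a) b]
  have hbM : b ≤ M := (le_max_right _ _).trans hM
  have hreg := ae_uniformlyRegulatedOn_dyadics (Z := fun t => X (p t)) (M := M) hα htail_p
    (fun t ht => by
      simp only [p, projIcc_of_le_left hab (ht.trans haM), projIcc_of_le_left hab haM])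
    (fun t ht => by
      simp only [p, projIcc_of_right_le hab (hbM.trans ht), projIcc_of_right_le hab hbM])
  obtain ⟨Y, hY, hmod⟩ := exists_isCadlag_modification_of_ae_uniformlyRegulatedOn dense_dyadics hreg
    fun t => (hcont (p t) (hp_mem t)).comp (tendsto_projIcc_nhdsGT hab t)
  refine ⟨Y, hY, fun t ht => ?_⟩
  simpa only [p, projIcc_of_mem hab ht] using hmod t

lemma measure_lt_middleDist_le {x y z : Ξ → E} (hxy : AEMeasurable (fun ω => dist (x ω) (y ω)) Q)
    (hyz : AEMeasurable (fun ω => dist (y ω) (z ω)) Q) {q c : ℝ} (hq : 0 ≤ q) (hc : 0 < c) :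
    Q {ω | c < middleDist (x ω) (y ω) (z ω)} ≤
      (∫⁻ ω, ENNReal.ofReal (dist (x ω) (y ω) ^ q * dist (y ω) (z ω) ^ q) ∂Q) /
        ENNReal.ofReal (c ^ (2 * q)) := by
  refine (measure_mono fun ω hω => ENNReal.ofReal_le_ofReal ?_).trans
    (meas_ge_le_lintegral_div (by fun_prop) (by simpa using Real.rpow_pos_of_pos hc _)
      ENNReal.ofReal_ne_top)
  obtain ⟨hcxy, hcyz⟩ : c < dist (x ω) (y ω) ∧ c < dist (y ω) (z ω) := lt_min_iff.1 hω
  rw [two_mul, Real.rpow_add hc]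
  gcongr

end TailBound

theorem cadlag_modification_of_moment_general
    {Ξ : Type*} [MeasurableSpace Ξ] {Q : Measure Ξ}
    {E : Type*} [PseudoMetricSpace E] [CompleteSpace E]
    {a b : ℝ} (hab : a ≤ b) {X : ℝ → Ξ → E}
    (hmeas : ∀ s ∈ Icc a b, ∀ t ∈ Icc a b, AEMeasurable (fun ω => dist (X s ω) (X t ω)) Q)
    (hcont : ∀ t ∈ Icc a b, TendstoInMeasure Q X (𝓝[Icc t b] t) (X t))
    {q α C : ℝ} (hq : 0 < q) (hα : 1 < α) (hC : 0 ≤ C)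
    (hmoment : ∀ s t u, a ≤ s → s ≤ t → t ≤ u → u ≤ b →
      ∫⁻ ω, ENNReal.ofReal (dist (X s ω) (X t ω) ^ q * dist (X t ω) (X u ω) ^ q) ∂Q ≤
        ENNReal.ofReal (C * |u - s| ^ α)) :
    ∃ Y : ℝ → Ξ → E, (∀ ω, IsCadlag (Y · ω)) ∧
      ∀ t ∈ Icc a b, ∀ᵐ ω ∂Q, dist (X t ω) (Y t ω) = 0 := by
  refine exists_isCadlag_modification_of_tail_bound (β := 2 * q) hab hC hα
    (fun s t u has hst htu hub c hc => ?_) hcont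
  have hsu : 0 ≤ u - s := sub_nonneg.2 (hst.trans htu)
  have ht : t ∈ Icc a b := ⟨has.trans hst, htu.trans hub⟩
  rw [ENNReal.ofReal_div_of_pos (by positivity), ← abs_of_nonneg hsu]
  exact (measure_lt_middleDist_le (hmeas s ⟨has, hst.trans ht.2⟩ t ht)
    (hmeas t ht u ⟨ht.1.trans htu, hub⟩) hq.le hc).trans
      (ENNReal.div_le_div_right (hmoment s t u has hst htu hub) _)

/-- **Corollary (càdlàg modification under a product-moment condition).**
Let `(Ξ, 𝒢, ℚ)` be a complete probability space, `(E, Δ)` a complete metric space,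
`T > 0`, and `X = (X_t)_{t∈[0,T]}` a family of functions `X_t : Ξ → E` such that
`ω ↦ dist (X s ω) (X t ω)` is measurable for all `s, t ∈ [0,T]` and `X` is continuous
in probability.  If there exist `q > 1/2`, `r > 0` and `C > 0` with
`E[Δ(X_s,X_t)^q · Δ(X_t,X_u)^q] ≤ C |u−s|^{1+r}` for all `0 ≤ s ≤ t ≤ u ≤ T`,
then `X` has a càdlàg modification. -/
theorem cadlag_modification_of_moment
    {Ξ : Type*} [MeasurableSpace Ξ] (Q : Measure Ξ) [IsProbabilityMeasure Q]
    (hQcomplete : Q.IsComplete)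
    {E : Type*} [MetricSpace E] [CompleteSpace E]
    (T : ℝ) (hT : 0 < T)
    (X : ℝ → Ξ → E)
    (hmeas : ∀ s ∈ Set.Icc (0 : ℝ) T, ∀ t ∈ Set.Icc (0 : ℝ) T,
      Measurable fun ω => dist (X s ω) (X t ω))
    (hcontP : ∀ t ∈ Set.Icc (0 : ℝ) T, ∀ ε > (0 : ℝ),
      Tendsto (fun s => Q {ω | ε < dist (X s ω) (X t ω)})
        (nhdsWithin t (Set.Icc (0 : ℝ) T)) (nhds 0))
    (q r C : ℝ) (hq : 1 / 2 < q) (hr : 0 < r) (hC : 0 < C)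
    (hineq : ∀ s t u : ℝ, 0 ≤ s → s ≤ t → t ≤ u → u ≤ T →
      ∫⁻ ω, ENNReal.ofReal
          ((dist (X s ω) (X t ω)) ^ q * (dist (X t ω) (X u ω)) ^ q) ∂Q
        ≤ ENNReal.ofReal (C * |u - s| ^ (1 + r))) :
    ∃ X' : ℝ → Ξ → E,
      (∀ ω : Ξ,
        (∀ t ∈ Set.Ico (0 : ℝ) T,
          Tendsto (fun s => X' s ω) (nhdsWithin t (Set.Ioc t T)) (nhds (X' t ω))) ∧
        (∀ t ∈ Set.Ioc (0 : ℝ) T, ∃ L : E,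
          Tendsto (fun s => X' s ω) (nhdsWithin t (Set.Ico 0 t)) (nhds L))) ∧
      (∀ t ∈ Set.Icc (0 : ℝ) T, ∀ᵐ ω ∂Q, dist (X t ω) (X' t ω) = 0) := by
  obtain ⟨X', hX', hmod⟩ := cadlag_modification_of_moment_general (Q := Q) (X := X) hT.le
    (fun s hs t ht => (hmeas s hs t ht).aemeasurable)
    (fun t ht => (tendstoInMeasure_of_tendsto_measure_lt_dist (hcontP t ht)).mono
      (nhdsWithin_mono t (Icc_subset_Icc_left ht.1)))
    (by linarith) (by linarith) hC.le hineq
  exact ⟨X', fun ω => ⟨fun t _ => (hX' ω).tendsto_Ioc t T,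
    fun t _ => (hX' ω).exists_tendsto_Ico 0 t⟩, hmod⟩
end

section
/- Let (Ξ, 𝒢, ℚ) be a probability space, (E, Δ) a metric space, T > 0, and X = (X_t)_{t∈[0,T]} a family of functions X_t: Ξ → E such that ω ↦ Δ(X_s(ω), X_t(ω)) is 𝒢-measurable for all s, t ∈ [0,T]. Suppose there exist non-decreasing functions δ: [0,T] → [0,∞) and θ: [0, T∨1] → [0,∞), with θ concave and θ(0) = 0, such that for all 0 ≤ s ≤ t ≤ u ≤ T and all A ∈ 𝒢, E_ℚ[min(Δ(X_s, X_t), Δ(X_t, X_u)) · 1_A] ≤ δ(u−s) · θ(ℚ(A)). Then for every n ∈ ℕ, E_ℚ[ max_{t ∈ S_{n+1}∖S_n} min( Δ(X_{t_n^−}, X_t), Δ(X_t, X_{t_n^+}) ) ] ≤ δ(T 2^{−n}) · 2^n θ(2^{−n}), where S_n = {T j 2^{−n} : j = 0, …, 2^n} and, for t ∈ S_{n+1}∖S_n, t_n^− and t_n^+ denote the largest point of S_n not exceeding t and the smallest point of S_n strictly greater than t, respectively. -/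
open MeasureTheory Filter Set Topology
open scoped ENNReal

/-!
Let `τ` be a random index at which the maximum of the nonnegative random variables `f i`, `i ∈ ι`,
is attained. Splitting `f τ` along the fibres `A i = {τ = i}` and using the hypothesis on each of
them bounds `E[max f]` by `∑ i, φ (Q (A i))` with `φ = δ(h) θ`. As the fibres partition the space,
their measures sum to `Q Ξ`, and Jensen's inequality for the concave `φ` bounds the sum by
`|ι| φ (Q Ξ / |ι|)`. For the dyadic estimate `ι` indexes the `2 ^ n` intervals of level `n`, all of
length `h = T / 2 ^ n`, cut at their midpoints.
-/

theorem sum_map_le_card_smul_map_of_concaveOn {𝕜 E β ι : Type*}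
    [Field 𝕜] [LinearOrder 𝕜] [IsStrictOrderedRing 𝕜]
    [AddCommGroup E] [Module 𝕜 E]
    [AddCommGroup β] [PartialOrder β] [IsOrderedAddMonoid β] [Module 𝕜 β]
    [IsStrictOrderedModule 𝕜 β]
    {s : Set E} {φ : E → β} (hφ : ConcaveOn 𝕜 s φ) {t : Finset ι} {p : ι → E}
    (hp : ∀ i ∈ t, p i ∈ s) :
    ∑ i ∈ t, φ (p i) ≤ (t.card : 𝕜) • φ ((t.card : 𝕜)⁻¹ • ∑ i ∈ t, p i) := by
  obtain rfl | ht := t.eq_empty_or_nonempty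
  · simp
  have hcard : (0 : 𝕜) < t.card := by exact_mod_cast ht.card_pos
  have jensen := hφ.le_map_sum (t := t) (w := fun _ ↦ (t.card : 𝕜)⁻¹) (p := p)
    (fun _ _ ↦ by positivity) (by simp [hcard.ne']) hp
  rw [← Finset.smul_sum, ← Finset.smul_sum] at jensen
  exact (inv_smul_le_iff_of_pos hcard).1 jensen

section RandomIndex

variable {Ω ι : Type*} [MeasurableSpace Ω]

theorem exists_measurable_argmax {α : Type*} [Finite ι] [Nonempty ι] [MeasurableSpace ι]
    [MeasurableSingletonClass ι] [LinearOrder α] [TopologicalSpace α] [OrderClosedTopology α]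
    [SecondCountableTopology α] [MeasurableSpace α] [OpensMeasurableSpace α]
    {f : ι → Ω → α} (hf : ∀ i, Measurable (f i)) :
    ∃ τ : Ω → ι, Measurable τ ∧ ∀ ω i, f i ω ≤ f (τ ω) ω := by
  classical
  suffices h : ∀ s : Finset ι, s.Nonempty →
      ∃ τ : Ω → ι, Measurable τ ∧ ∀ ω, ∀ i ∈ s, f i ω ≤ f (τ ω) ω by
    have := Fintype.ofFinite ι
    simpa using h Finset.univ Finset.univ_nonempty
  intro s hs
  induction hs using Finset.Nonempty.cons_induction with
  | singleton a => exact ⟨fun _ ↦ a, measurable_const, by simp⟩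
  | cons a s _ _ ih =>
    obtain ⟨τ, hτ, hmax⟩ := ih
    have hfτ : Measurable fun ω ↦ f (τ ω) ω :=
      (measurable_from_prod_countable_right (f := fun x : ι × Ω ↦ f x.1 x.2) hf).comp
        (hτ.prodMk measurable_id)
    refine ⟨fun ω ↦ if f (τ ω) ω ≤ f a ω then a else τ ω,
      Measurable.ite (measurableSet_le hfτ (hf a)) measurable_const hτ, fun ω i hi ↦ ?_⟩
    dsimp only
    obtain rfl | his := Finset.mem_cons.1 hi
    · split_ifs with hle
      exacts [le_rfl, (not_le.1 hle).le]
    · split_ifs with hle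
      exacts [(hmax ω i his).trans hle, hmax ω i his]

theorem lintegral_eq_sum_setLIntegral_fiber [Fintype ι] [MeasurableSpace ι]
    [MeasurableSingletonClass ι] (μ : Measure Ω) (F : ι → Ω → ℝ≥0∞) {τ : Ω → ι}
    (hτ : Measurable τ) :
    ∫⁻ ω, F (τ ω) ω ∂μ = ∑ i, ∫⁻ ω in τ ⁻¹' {i}, F i ω ∂μ := by
  have hfiber (i : ι) : MeasurableSet (τ ⁻¹' {i}) := hτ (measurableSet_singleton i)
  have hcover : ⋃ i, τ ⁻¹' {i} = univ := by simp [← preimage_iUnion, iUnion_of_singleton]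
  rw [← setLIntegral_univ, ← hcover, lintegral_iUnion hfiber (pairwise_disjoint_fiber τ),
    tsum_fintype]
  refine Finset.sum_congr rfl fun i _ ↦ setLIntegral_congr_fun (hfiber i) ?_
  rintro ω rfl
  rfl

theorem lintegral_apply_le_of_concaveOn [Fintype ι] [MeasurableSpace ι]
    [MeasurableSingletonClass ι] {μ : Measure Ω} [IsFiniteMeasure μ] {F : ι → Ω → ℝ≥0∞} {φ : ℝ → ℝ}
    (hφ : ConcaveOn ℝ (Icc 0 (μ.real univ)) φ) (hφ0 : ∀ x ∈ Icc 0 (μ.real univ), 0 ≤ φ x)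
    (hF : ∀ i A, MeasurableSet A → ∫⁻ ω in A, F i ω ∂μ ≤ ENNReal.ofReal (φ (μ.real A)))
    {τ : Ω → ι} (hτ : Measurable τ) :
    ∫⁻ ω, F (τ ω) ω ∂μ
      ≤ ENNReal.ofReal (Fintype.card ι * φ (μ.real univ / Fintype.card ι)) := by
  have hmem (i : ι) : μ.real (τ ⁻¹' {i}) ∈ Icc 0 (μ.real univ) :=
    ⟨measureReal_nonneg, measureReal_mono (subset_univ _)⟩
  have hfiber (i : ι) : MeasurableSet (τ ⁻¹' {i}) := hτ (measurableSet_singleton i)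
  have hmass : ∑ i, μ.real (τ ⁻¹' {i}) = μ.real univ := by
    simpa using sum_measureReal_preimage_singleton Finset.univ fun i _ ↦ hfiber i
  have jensen : ∑ i, φ (μ.real (τ ⁻¹' {i}))
      ≤ Fintype.card ι * φ (μ.real univ / Fintype.card ι) := by
    simpa [hmass, inv_mul_eq_div] using
      sum_map_le_card_smul_map_of_concaveOn hφ (t := Finset.univ) fun i _ ↦ hmem i
  calc ∫⁻ ω, F (τ ω) ω ∂μ
      = ∑ i, ∫⁻ ω in τ ⁻¹' {i}, F i ω ∂μ := lintegral_eq_sum_setLIntegral_fiber μ F hτ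
    _ ≤ ∑ i, ENNReal.ofReal (φ (μ.real (τ ⁻¹' {i}))) :=
        Finset.sum_le_sum fun i _ ↦ hF i _ (hfiber i)
    _ = ENNReal.ofReal (∑ i, φ (μ.real (τ ⁻¹' {i}))) :=
        (ENNReal.ofReal_sum_of_nonneg fun i _ ↦ hφ0 _ (hmem i)).symm
    _ ≤ ENNReal.ofReal (Fintype.card ι * φ (μ.real univ / Fintype.card ι)) :=
        ENNReal.ofReal_le_ofReal jensen

theorem lintegral_ofReal_iSup_le_of_concaveOn [Fintype ι] [Nonempty ι]
    {μ : Measure Ω} [IsFiniteMeasure μ] {f : ι → Ω → ℝ} (hf : ∀ i, Measurable (f i)) {φ : ℝ → ℝ}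
    (hφ : ConcaveOn ℝ (Icc 0 (μ.real univ)) φ) (hφ0 : ∀ x ∈ Icc 0 (μ.real univ), 0 ≤ φ x)
    (hfφ : ∀ i A, MeasurableSet A →
      ∫⁻ ω in A, ENNReal.ofReal (f i ω) ∂μ ≤ ENNReal.ofReal (φ (μ.real A))) :
    ∫⁻ ω, ENNReal.ofReal (⨆ i, f i ω) ∂μ
      ≤ ENNReal.ofReal (Fintype.card ι * φ (μ.real univ / Fintype.card ι)) := by
  let _ : MeasurableSpace ι := ⊤
  obtain ⟨τ, hτ, hmax⟩ := exists_measurable_argmax hf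
  have hsup (ω : Ω) : ⨆ i, f i ω = f (τ ω) ω :=
    IsGreatest.csSup_eq ⟨mem_range_self _, forall_mem_range.2 (hmax ω)⟩
  simp only [hsup]
  exact lintegral_apply_le_of_concaveOn (F := fun i ω ↦ ENNReal.ofReal (f i ω)) hφ hφ0 hfφ hτ

end RandomIndex

theorem lintegral_ofReal_iSup_min_dist_le {ι Ξ E : Type*} [Fintype ι] [Nonempty ι]
    [MeasurableSpace Ξ] (Q : Measure Ξ) [IsFiniteMeasure Q] [PseudoMetricSpace E]
    {T : ℝ} (X : ℝ → Ξ → E)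
    (hmeas : ∀ s ∈ Icc 0 T, ∀ t ∈ Icc 0 T, Measurable fun ω ↦ dist (X s ω) (X t ω))
    {δ θ : ℝ → ℝ} (hθnonneg : ∀ x ∈ Icc 0 (Q.real univ), 0 ≤ θ x)
    (hθconcave : ConcaveOn ℝ (Icc 0 (Q.real univ)) θ)
    (hineq : ∀ s t u : ℝ, 0 ≤ s → s ≤ t → t ≤ u → u ≤ T → ∀ A, MeasurableSet A →
      ∫⁻ ω in A, ENNReal.ofReal (min (dist (X s ω) (X t ω)) (dist (X t ω) (X u ω))) ∂Q
        ≤ ENNReal.ofReal (δ (u - s) * θ (Q.real A)))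
    {h : ℝ} (hδ : 0 ≤ δ h) {s t u : ι → ℝ} (hs : ∀ i, 0 ≤ s i) (hst : ∀ i, s i ≤ t i)
    (htu : ∀ i, t i ≤ u i) (hu : ∀ i, u i ≤ T) (hlen : ∀ i, u i - s i = h) :
    ∫⁻ ω, ENNReal.ofReal
        (⨆ i, min (dist (X (s i) ω) (X (t i) ω)) (dist (X (t i) ω) (X (u i) ω))) ∂Q
      ≤ ENNReal.ofReal (δ h * (Fintype.card ι * θ (Q.real univ / Fintype.card ι))) := by
  have hs_mem (i) : s i ∈ Icc 0 T := ⟨hs i, (hst i).trans ((htu i).trans (hu i))⟩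
  have ht_mem (i) : t i ∈ Icc 0 T := ⟨(hs i).trans (hst i), (htu i).trans (hu i)⟩
  have hu_mem (i) : u i ∈ Icc 0 T := ⟨(ht_mem i).1.trans (htu i), hu i⟩
  rw [mul_left_comm]
  refine lintegral_ofReal_iSup_le_of_concaveOn
    (fun i ↦ (hmeas _ (hs_mem i) _ (ht_mem i)).min (hmeas _ (ht_mem i) _ (hu_mem i)))
    (hθconcave.smul hδ) (fun x hx ↦ mul_nonneg hδ (hθnonneg x hx)) fun i A hA ↦ ?_
  simpa only [hlen, smul_eq_mul] using hineq _ _ _ (hs i) (hst i) (htu i) (hu i) A hA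

theorem dyadic_midpoint_eq (T x : ℝ) (n : ℕ) :
    T * (2 * x + 1) / 2 ^ (n + 1) = midpoint ℝ (T * x / 2 ^ n) (T * (x + 1) / 2 ^ n) := by
  rw [midpoint_eq_smul_add, smul_eq_mul, invOf_eq_inv, pow_succ]
  field_simp
  ring

theorem dyadic_oscillation_estimate_general
    {Ξ : Type*} [MeasurableSpace Ξ] (Q : Measure Ξ) [IsFiniteMeasure Q]
    {E : Type*} [PseudoMetricSpace E] {T : ℝ} (hT : 0 ≤ T) (X : ℝ → Ξ → E)
    (hmeas : ∀ s ∈ Icc 0 T, ∀ t ∈ Icc 0 T, Measurable fun ω ↦ dist (X s ω) (X t ω))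
    {δ θ : ℝ → ℝ} (hδnonneg : ∀ u ∈ Icc 0 T, 0 ≤ δ u)
    (hθnonneg : ∀ u ∈ Icc 0 (Q.real univ), 0 ≤ θ u)
    (hθconcave : ConcaveOn ℝ (Icc 0 (Q.real univ)) θ)
    (hineq : ∀ s t u : ℝ, 0 ≤ s → s ≤ t → t ≤ u → u ≤ T → ∀ A, MeasurableSet A →
      ∫⁻ ω in A, ENNReal.ofReal (min (dist (X s ω) (X t ω)) (dist (X t ω) (X u ω))) ∂Q
        ≤ ENNReal.ofReal (δ (u - s) * θ (Q.real A)))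
    (n : ℕ) :
    ∫⁻ ω, ENNReal.ofReal
        (⨆ j : Fin (2 ^ n),
          min (dist (X (T * (j : ℕ) / 2 ^ n) ω) (X (T * (2 * (j : ℕ) + 1) / 2 ^ (n + 1)) ω))
              (dist (X (T * (2 * (j : ℕ) + 1) / 2 ^ (n + 1)) ω) (X (T * ((j : ℕ) + 1) / 2 ^ n) ω)))
        ∂Q
      ≤ ENNReal.ofReal (δ (T / 2 ^ n) * (2 ^ n * θ (Q.real univ / 2 ^ n))) := by
  let a (j : Fin (2 ^ n)) : ℝ := T * (j : ℕ) / 2 ^ n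
  let b (j : Fin (2 ^ n)) : ℝ := T * ((j : ℕ) + 1) / 2 ^ n
  have ha (j) : 0 ≤ a j := by positivity
  have hab (j) : a j ≤ b j := by simp only [a, b]; gcongr; linarith
  have hb (j) : b j ≤ T := by
    have hj : ((j : ℕ) : ℝ) + 1 ≤ 2 ^ n := by exact_mod_cast j.2
    exact (div_le_iff₀ (by positivity)).2 (by gcongr)
  have hlen (j) : b j - a j = T / 2 ^ n := by simp only [a, b]; ring
  have hδ : 0 ≤ δ (T / 2 ^ n) :=
    hδnonneg _ ⟨by positivity, div_le_self hT (one_le_pow₀ one_le_two)⟩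
  have main := lintegral_ofReal_iSup_min_dist_le Q X hmeas hθnonneg hθconcave hineq hδ ha
    (t := fun j ↦ midpoint ℝ (a j) (b j)) (fun j ↦ left_le_midpoint.2 (hab j))
    (fun j ↦ midpoint_le_right.2 (hab j)) hb hlen
  simpa [dyadic_midpoint_eq, a, b] using main

/-- **Lemma (dyadic oscillation estimate).**
Under the hypothesis `E[min(Δ(X_s,X_t), Δ(X_t,X_u)) ⬝ 1_A] ≤ δ(u−s)·θ(ℚ A)`
(with `δ, θ` non-decreasing, `θ` concave, `θ 0 = 0`), one has, for every `n`,
`E[max_{t ∈ S_{n+1}∖S_n} min(Δ(X_{t_n^−}, X_t), Δ(X_t, X_{t_n^+}))]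
  ≤ δ(T 2^{−n}) · 2^n θ(2^{−n})`,
where the points of `S_{n+1}∖S_n` are `t = T(2j+1)/2^{n+1}`, `j = 0, …, 2^n − 1`, with
`t_n^− = T j/2^n` and `t_n^+ = T (j+1)/2^n`. -/
theorem dyadic_oscillation_estimate
    {Ξ : Type*} [MeasurableSpace Ξ] (Q : Measure Ξ) [IsProbabilityMeasure Q]
    {E : Type*} [MetricSpace E]
    (T : ℝ) (hT : 0 < T)
    (X : ℝ → Ξ → E)
    (hmeas : ∀ s ∈ Set.Icc (0 : ℝ) T, ∀ t ∈ Set.Icc (0 : ℝ) T,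
      Measurable fun ω => dist (X s ω) (X t ω))
    (δ θ : ℝ → ℝ)
    (hδmono : MonotoneOn δ (Set.Icc 0 T))
    (hδnonneg : ∀ u ∈ Set.Icc (0 : ℝ) T, 0 ≤ δ u)
    (hθmono : MonotoneOn θ (Set.Icc 0 (max T 1)))
    (hθ0 : θ 0 = 0) (hθnonneg : ∀ u ∈ Set.Icc (0 : ℝ) (max T 1), 0 ≤ θ u)
    (hθconcave : ConcaveOn ℝ (Set.Icc 0 (max T 1)) θ)
    (hineq : ∀ s t u : ℝ, 0 ≤ s → s ≤ t → t ≤ u → u ≤ T →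
      ∀ A : Set Ξ, MeasurableSet A →
        ∫⁻ ω in A,
            ENNReal.ofReal (min (dist (X s ω) (X t ω)) (dist (X t ω) (X u ω))) ∂Q
          ≤ ENNReal.ofReal (δ (u - s) * θ (Q A).toReal))
    (n : ℕ) :
    ∫⁻ ω, ENNReal.ofReal
        (⨆ j : Fin (2 ^ n),
          min (dist (X (T * ((j : ℕ) : ℝ) / 2 ^ n) ω)
                 (X (T * (2 * ((j : ℕ) : ℝ) + 1) / 2 ^ (n + 1)) ω))
              (dist (X (T * (2 * ((j : ℕ) : ℝ) + 1) / 2 ^ (n + 1)) ω)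
                 (X (T * (((j : ℕ) : ℝ) + 1) / 2 ^ n) ω))) ∂Q
      ≤ ENNReal.ofReal (δ (T / 2 ^ n) * (2 ^ n * θ (1 / 2 ^ n))) := by
  have hsub : Icc 0 (Q.real univ) ⊆ Icc 0 (max T 1) := Icc_subset_Icc_right (by simp)
  simpa using dyadic_oscillation_estimate_general Q hT.le X hmeas hδnonneg
    (fun u hu ↦ hθnonneg u (hsub hu)) (hθconcave.subset hsub (convex_Icc _ _)) hineq n
end
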